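/- arXiv:2310.15462 — 2 statements merged into one kernel-verified Lean document; each statement's English description precedes it below -/
import Mathlib

section
/- Under Assumption 2.1 and with the multiple empirical integrals I_k^{(n)} defined from the triangular array, for all k_1, k_2 ≥ 1, f ∈ L²(μ^{k_1}) and g ∈ L²(μ^{k_2}), the following identity holds almost surely: I_{k_1}^{(n)}(f) · I_{k_2}^{(n)}(g) = Σ_{l=0}^{min(k_1,k_2)} Σ_{p=0}^{l} (n/a_n)^{(l+p)/2} · |𝓑(l,p)| · n^{−(l−p)/2} · I_{k_1+k_2−l−p}^{(n)}( (f⊗g)̄_{𝓑(l,p)} ), where (f⊗g)̄_{𝓑(l,p)} is the averaged colored-diagram function defined in the context. -/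
open MeasureTheory ProbabilityTheory Filter Topology
open scoped ENNReal NNReal

/-- **Assumption 2.1** of the paper, for data `(μ, a, P)`. -/
def Assumption21 {E : Type*} [MeasurableSpace E] (μ : Measure E) (a : ℕ → ℝ)
    (P : ℕ → Measure E) : Prop :=
  μ Set.univ = ∞ ∧
  (∀ n : ℕ, 1 ≤ n → 0 < a n) ∧
  Tendsto a atTop atTop ∧
  Tendsto (fun n : ℕ => a n / n) atTop (𝓝 0) ∧
  (∀ B : Set E, MeasurableSet B → ∀ n : ℕ, 1 ≤ n →
    ENNReal.ofReal ((n : ℝ) / a n) * P n B ≤ ENNReal.ofReal (((n : ℝ) + 1) / a (n + 1)) * P (n + 1) B) ∧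
  (∀ B : Set E, MeasurableSet B →
    Tendsto (fun n : ℕ => ENNReal.ofReal ((n : ℝ) / a n) * P n B) atTop (𝓝 (μ B)))

/-- The positive (`true`) and negative (`false`) parts of the signed measure `√a · W_n`. -/
noncomputable def mixMeasure {E : Type*} [MeasurableSpace E] (P : Measure E) (n : ℕ)
    (X : Fin n → E) : Bool → Measure E
  | true => ∑ j : Fin n, Measure.dirac (X j)
  | false => (n : ℝ≥0) • P

/-- The multiple empirical integral `I_k^{(n)}(f)` for one realization `X` of the sample:
the integral of `f` over the off-diagonal set with respect to the `k`-fold product of the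
signed measure `W_n = a^{-1/2} (Σ_j δ_{X_j} − n P)`, expanded multilinearly into its
positive and negative parts. -/
noncomputable def empInt {E : Type*} [MeasurableSpace E] (P : Measure E)
    (n : ℕ) (a : ℝ) (X : Fin n → E) (k : ℕ) (f : (Fin k → E) → ℝ) : ℝ :=
  (Real.sqrt a)⁻¹ ^ k *
    ∑ ε : Fin k → Bool,
      (-1 : ℝ) ^ (Finset.univ.filter fun i => ε i = false).card *
        ∫ u in {u : Fin k → E | Function.Injective u}, f u
          ∂(Measure.pi fun i => mixMeasure P n X (ε i))

/-- The symmetrization `f̃` of a function of `k` variables. -/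
noncomputable def symmetrize {E : Type*} (k : ℕ) (f : (Fin k → E) → ℝ) :
    (Fin k → E) → ℝ :=
  fun u => (k.factorial : ℝ)⁻¹ * ∑ σ : Equiv.Perm (Fin k), f (u ∘ σ)


/-- The function `(f ⊗ g)_{B(𝒩,𝒩₁)}` of `k1 + k2 - l - p` variables attached to a colored
diagram: the diagram is the pair of injections `(j1, j2)` and the colored edges form the
subset `S ⊆ Fin l` (with `S.card = p`).  The variables are enumerated so that the first
`k1 - p` of them are the surviving first-row variables (in increasing order of index) and
the remaining `k2 - l` are the unmatched second-row variables (in increasing order); the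
`p` variables corresponding to edges in `S` are integrated out with respect to `P`
(realized as an integral over `E^{k1}`, the unused coordinates being dummy variables for
the probability measure `P`). -/
noncomputable def coloredFun {E : Type*} [MeasurableSpace E] [Nonempty E] (P : Measure E)
    (k1 k2 l p : ℕ) (j1 : Fin l ↪ Fin k1) (j2 : Fin l ↪ Fin k2) (S : Finset (Fin l))
    (f : (Fin k1 → E) → ℝ) (g : (Fin k2 → E) → ℝ)
    (v : Fin (k1 + k2 - l - p) → E) : ℝ :=
  let A : Finset (Fin k1) := Finset.univ.filter fun i => ∀ s ∈ S, j1 s ≠ i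
  let B : Finset (Fin k2) := Finset.univ.filter fun i => ∀ s : Fin l, j2 s ≠ i
  ∫ w : Fin k1 → E,
    (fun x : Fin k1 → E =>
      f x * g (fun i =>
        if hm : ∃ s, j2 s = i then x (j1 (Classical.choose hm))
        else if hib : i ∈ B ∧ A.card + B.card ≤ k1 + k2 - l - p then
          v ⟨A.card + ((B.orderIsoOfFin rfl).symm ⟨i, hib.1⟩ : Fin B.card),
             lt_of_lt_of_le (Nat.add_lt_add_left (Fin.is_lt _) _) hib.2⟩
        else Classical.arbitrary E))
      (fun i : Fin k1 =>
        if hia : i ∈ A ∧ A.card ≤ k1 + k2 - l - p then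
          v (Fin.castLE hia.2 ((A.orderIsoOfFin rfl).symm ⟨i, hia.1⟩))
        else w i)
    ∂(Measure.pi fun _ : Fin k1 => P)

/-- The function `(f ⊗ g)̄_{𝓑(l,p)}`: the average of `coloredFun` over all colored diagrams
with `l` edges, `p` of which are colored (each colored diagram being counted `l!` times). -/
noncomputable def avgColored {E : Type*} [MeasurableSpace E] [Nonempty E] (P : Measure E)
    (k1 k2 l p : ℕ) (f : (Fin k1 → E) → ℝ) (g : (Fin k2 → E) → ℝ) :
    (Fin (k1 + k2 - l - p) → E) → ℝ :=
  fun v =>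
    (((Fintype.card (Fin l ↪ Fin k1) * Fintype.card (Fin l ↪ Fin k2) *
        (Finset.powersetCard p (Finset.univ : Finset (Fin l))).card : ℕ) : ℝ))⁻¹ *
      ∑ j1 : Fin l ↪ Fin k1, ∑ j2 : Fin l ↪ Fin k2,
        ∑ S ∈ Finset.powersetCard p (Finset.univ : Finset (Fin l)),
          coloredFun P k1 k2 l p j1 j2 S f g v

/-!
Expanding the powers of `∑ a, δ_{X a} - n P` multilinearly writes `I_k(f)` as a signed sum over
labellings, which give each variable a sample point or leave it to be integrated against `P`. For
an atomless `P` the off-diagonal restriction becomes the condition that no sample point is used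
twice. In a product of two such sums, the coincidences of labels between the rows form a partial
matching, enumerated by exactly `l!` diagrams `(j₁, j₂)`, where `l` is its size. The labellings
that belong to a diagram are those of its glued variables that do label every edge;
inclusion–exclusion over the unlabelled edges produces the sum over the colorings, and an unlabelled
edge carries the weight `-n` of the `P`-integral of its variable.
-/

namespace EmpiricalDiagram

section PiMeasure

variable {E α β : Type*} [MeasurableSpace E] [Fintype α] [Fintype β]

lemma measurePreserving_comp_of_injective (μ : β → Measure E) [∀ b, IsProbabilityMeasure (μ b)]
    {e : α → β} (he : Function.Injective e) :
    MeasurePreserving (fun z : β → E => z ∘ e) (Measure.pi μ) (Measure.pi fun a => μ (e a)) := by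
  have hindep : iIndepFun (fun b (z : β → E) => z b) (Measure.pi μ) :=
    iIndepFun_pi (X := fun _ x => x) fun _ => aemeasurable_id
  refine ((hindep.precomp he).hasLaw_pi fun a => ?_).measurePreserving (by fun_prop)
  exact (measurePreserving_eval μ (e a)).hasLaw

lemma measurePreserving_sumElim (μ : α → Measure E) (ν : β → Measure E) [∀ a, SigmaFinite (μ a)]
    [∀ b, SigmaFinite (ν b)] :
    MeasurePreserving (fun z : (α → E) × (β → E) => (Sum.elim z.1 z.2 : α ⊕ β → E))
      ((Measure.pi μ).prod (Measure.pi ν)) (Measure.pi (Sum.elim μ ν)) := by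
  have : ∀ i, SigmaFinite (Sum.elim μ ν i) := Sum.forall.2 ⟨‹_›, ‹_›⟩
  convert measurePreserving_sumPiEquivProdPi_symm (X := fun _ => E) (Sum.elim μ ν) using 1
  · ext z i
    cases i <;> rfl
  · rfl

lemma pi_smul (c : α → ℝ≥0) (μ : α → Measure E) [∀ i, SigmaFinite (μ i)] :
    Measure.pi (fun i => c i • μ i) = (∏ i, c i) • Measure.pi μ := by
  refine Measure.pi_eq fun s _ => ?_
  simp only [Measure.smul_apply, Measure.pi_pi, ENNReal.smul_def, smul_eq_mul,
    ENNReal.ofNNReal_finsetProd, Finset.prod_mul_distrib]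

lemma pi_finsetSum {κ : Type*} [DecidableEq α] (t : α → Finset κ) (μ : κ → Measure E)
    [∀ o, IsFiniteMeasure (μ o)] :
    Measure.pi (fun i => ∑ o ∈ t i, μ o) =
      ∑ σ ∈ Fintype.piFinset t, Measure.pi (fun i => μ (σ i)) := by
  refine Measure.pi_eq fun s _ => ?_
  simp only [Measure.finsetSum_apply, Measure.pi_pi, Finset.prod_univ_sum]

lemma pi_mono {μ ν : α → Measure E} [∀ i, SigmaFinite (μ i)] (h : ∀ i, μ i ≤ ν i) :
    Measure.pi μ ≤ Measure.pi ν := by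
  refine Measure.le_iff.2 fun s hs => ?_
  have hbox : (Measure.pi μ).toOuterMeasure ≤ OuterMeasure.pi fun i => (ν i).toOuterMeasure := by
    refine OuterMeasure.le_pi.2 fun t _ => ?_
    rw [Measure.coe_toOuterMeasure, Measure.pi_pi]
    exact Finset.prod_le_prod' fun i _ => h i (t i)
  conv_rhs => rw [Measure.pi, toMeasure_apply _ _ hs]
  exact hbox s

lemma pi_le_smul_pi {μ ν : Measure E} [SigmaFinite μ] [SigmaFinite ν] {c : ℝ≥0} (h : μ ≤ c • ν) :
    Measure.pi (fun _ : α => μ) ≤ c ^ Fintype.card α • Measure.pi fun _ : α => ν := by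
  have := pi_mono fun _ : α => h
  rwa [pi_smul, Finset.prod_const, Finset.card_univ] at this

lemma ae_fst_ne_snd_iff [MeasurableEq E] {μ ν : Measure E} [SFinite ν] :
    (∀ᵐ z ∂μ.prod ν, z.1 ≠ z.2) ↔ ∀ᵐ x ∂μ, ν {x} = 0 := by
  have hset : {z : E × E | ¬z.1 ≠ z.2} = Set.diagonal E := by ext; simp
  have hslice (x : E) : Prod.mk x ⁻¹' Set.diagonal E = {x} := by ext; simp [eq_comm]
  rw [ae_iff, hset, Measure.measure_prod_null measurableSet_diagonal]
  simp only [hslice]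
  rfl

lemma ae_injective_pi [MeasurableEq E] {μ : α → Measure E} [∀ i, IsProbabilityMeasure (μ i)]
    (hμ : ∀ i j, i ≠ j → ∀ᵐ x ∂μ i, μ j {x} = 0) :
    ∀ᵐ u ∂Measure.pi μ, Function.Injective u := by
  have ae_ne {i j : α} (hij : i ≠ j) : ∀ᵐ u ∂Measure.pi μ, u i ≠ u j :=
    have he : Function.Injective ![i, j] := by
      simpa [Function.Injective, Fin.forall_fin_two, eq_comm] using hij
    ((measurePreserving_piFinTwo fun s => μ (![i, j] s)).comp
      (measurePreserving_comp_of_injective μ he)).quasiMeasurePreserving.ae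
      (ae_fst_ne_snd_iff.2 (hμ i j hij))
  have hne : ∀ᵐ u ∂Measure.pi μ, ∀ i j, i ≠ j → u i ≠ u j := by
    simp only [ae_all_iff]
    exact fun i j hij => ae_ne hij
  filter_upwards [hne] with u hu i j hij using not_imp_not.1 (hu i j) hij

lemma ae_integrable_map_of_measurePreserving {A B C F : Type*} [MeasurableSpace A]
    [MeasurableSpace B] [MeasurableSpace C] [NormedAddCommGroup F] {μ : Measure A} {ν : Measure B}
    {ρ : Measure C} [SFinite μ] [SFinite ν] {φ : A × B → C} (hφ : MeasurePreserving φ (μ.prod ν) ρ)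
    {f : C → F} (hf : Integrable f ρ) :
    ∀ᵐ x ∂μ, Integrable f (ν.map fun y => φ (x, y)) := by
  let κ : Kernel A C := (Kernel.id ×ₖ Kernel.const A ν).map φ
  have hκ : κ ∘ₘ μ = ρ := by
    rw [← hφ.map_eq, ← Measure.compProd_const, Measure.compProd_eq_comp_prod,
      Measure.map_comp _ _ hφ.measurable]
  filter_upwards [Measure.ae_integrable_of_integrable_comp (hκ ▸ hf)] with x hx
  rwa [Kernel.map_apply _ hφ.measurable, Kernel.prod_apply, Kernel.id_apply, Kernel.const_apply,
    Measure.dirac_prod, Measure.map_map hφ.measurable measurable_prodMk_left] at hx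

end PiMeasure

section Labellings

variable {E α β ι : Type*} [MeasurableSpace E]

/-- A labelling `σ` of variables by sample points, `none` marking a variable that is integrated
out, is partially injective if no sample point is used twice. -/
def PartialInjective (σ : α → Option ι) : Prop :=
  ∀ ⦃i i' a⦄, a ∈ σ i → a ∈ σ i' → i = i'

noncomputable instance : DecidablePred (PartialInjective (α := α) (ι := ι)) :=
  Classical.decPred _

lemma PartialInjective.comp {σ : β → Option ι} (hσ : PartialInjective σ) {e : α → β}
    (he : Function.Injective e) : PartialInjective (σ ∘ e) :=
  fun _ _ _ hi hi' => he (hσ hi hi')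

/-- The law of a single variable with label `o`: a point mass at `X a` if `o = some a`, and `P` if
`o = none`. -/
noncomputable def labelLaw (P : Measure E) (X : ι → E) (o : Option ι) : Measure E :=
  o.elim P fun a => Measure.dirac (X a)

/-- The joint law of independent variables labelled by `σ`. -/
noncomputable def labelMeasure [Fintype α] (P : Measure E) (X : ι → E) (σ : α → Option ι) :
    Measure (α → E) :=
  Measure.pi fun i => labelLaw P X (σ i)

/-- The coefficient of `labelMeasure P X σ` in the expansion of the product of copies of the signed
measure `∑ a, δ_{X a} - card ι • P`. -/
noncomputable def labelWeight [Fintype α] [Fintype ι] (σ : α → Option ι) : ℝ :=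
  ∏ i, (σ i).elim (-(Fintype.card ι : ℝ)) fun _ => 1

/-- The contribution of the labelling `σ` to the integral `labelSum P X f`. -/
noncomputable def labelTerm [Fintype α] [Fintype ι] (P : Measure E) (X : ι → E)
    (f : (α → E) → ℝ) (σ : α → Option ι) : ℝ :=
  labelWeight σ * ∫ u, f u ∂labelMeasure P X σ

/-- The off-diagonal integral of `f` against the product of copies of the signed measure
`∑ a, δ_{X a} - card ι • P`, expanded over labellings. The off-diagonal restriction becomes partial
injectivity, which is correct when `X` is injective and `P` has no atoms. -/
noncomputable def labelSum [Fintype α] [DecidableEq α] [Fintype ι] (P : Measure E) (X : ι → E)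
    (f : (α → E) → ℝ) : ℝ :=
  ∑ σ : α → Option ι with PartialInjective σ, labelTerm P X f σ

/-- Every integral that occurs in `labelSum P X f` converges. -/
def LabelIntegrable [Fintype α] (P : Measure E) (X : ι → E) (f : (α → E) → ℝ) : Prop :=
  ∀ σ : α → Option ι, PartialInjective σ → Integrable f (labelMeasure P X σ)

/-- The point with coordinate `X a` at the variables labelled `a` and `w i` at the unlabelled
variables `i`. -/
def fill (X : ι → E) (σ : α → Option ι) (w : α → E) : α → E :=
  fun i => (σ i).elim (w i) X

variable [Fintype α] [Fintype β] (P : Measure E)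

lemma mixMeasure_eq_sum_labelLaw {n : ℕ} (X : Fin n → E) (b : Bool) :
    mixMeasure P n X b =
      ∑ o : Option (Fin n) with o.isSome = b, (o.elim n fun _ => 1 : ℝ≥0) • labelLaw P X o := by
  cases b <;> simp [mixMeasure, labelLaw, Finset.sum_filter, Fintype.sum_option]

variable [IsProbabilityMeasure P]

instance (X : ι → E) (o : Option ι) : IsProbabilityMeasure (labelLaw P X o) := by
  cases o <;> dsimp only [labelLaw, Option.elim] <;> infer_instance

instance (X : ι → E) (σ : α → Option ι) : IsProbabilityMeasure (labelMeasure P X σ) := by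
  unfold labelMeasure; infer_instance

lemma measurePreserving_labelMeasure_comp (X : ι → E) (σ : β → Option ι) {e : α → β}
    (he : Function.Injective e) :
    MeasurePreserving (fun z : β → E => z ∘ e) (labelMeasure P X σ) (labelMeasure P X (σ ∘ e)) :=
  measurePreserving_comp_of_injective _ he

lemma measurePreserving_labelMeasure_sumElim (X : ι → E) (σ : α → Option ι) (τ : β → Option ι) :
    MeasurePreserving (fun z : (α → E) × (β → E) => Sum.elim z.1 z.2)
      ((labelMeasure P X σ).prod (labelMeasure P X τ)) (labelMeasure P X (Sum.elim σ τ)) := by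
  have hlaw : (fun i => labelLaw P X (Sum.elim σ τ i)) =
      Sum.elim (fun i => labelLaw P X (σ i)) fun i => labelLaw P X (τ i) := by
    ext1 (i | i) <;> rfl
  rw [labelMeasure.eq_def P X (Sum.elim σ τ), hlaw]
  exact measurePreserving_sumElim _ _

lemma map_fill (X : ι → E) (σ : α → Option ι) :
    (Measure.pi fun _ => P).map (fill X σ) = labelMeasure P X σ := by
  have hcoord (i : α) : P.map (fun x => (σ i).elim x X) = labelLaw P X (σ i) := by
    cases σ i <;> simp [labelLaw]
  have hmeas (i : α) : Measurable fun x => (σ i).elim x X := by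
    cases σ i <;> simp only [Option.elim] <;> fun_prop
  have (i : α) : SigmaFinite (P.map fun x => (σ i).elim x X) := by
    rw [hcoord]; infer_instance
  simp only [labelMeasure, ← hcoord]
  exact Measure.pi_map_pi fun i => (hmeas i).aemeasurable

lemma measurePreserving_fill [Fintype ι] {σ : α → Option ι} (hσ : PartialInjective σ) :
    MeasurePreserving (fun z : (ι → E) × (α → E) => fill z.1 σ z.2)
      ((Measure.pi fun _ => P).prod (Measure.pi fun _ => P)) (Measure.pi fun _ => P) := by
  let source : α → ι ⊕ α := fun i => (σ i).elim (.inr i) .inl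
  have hsource : Function.Injective source := by
    intro i i' h
    cases hi : σ i with
    | none => cases hi' : σ i' <;> simp_all [source]
    | some a =>
      cases hi' : σ i' with
      | none => simp [source, hi, hi'] at h
      | some a' =>
        obtain rfl : a = a' := by simpa [source, hi, hi'] using h
        exact hσ hi hi'
  have hfill (z : (ι → E) × (α → E)) : fill z.1 σ z.2 = Sum.elim z.1 z.2 ∘ source := by
    ext i
    simp only [fill, source, Function.comp_apply]
    cases σ i <;> rfl
  simp only [hfill]
  have hconst : Sum.elim (fun _ : ι => P) (fun _ : α => P) = fun _ => P := Sum.elim_const_const P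
  exact (measurePreserving_comp_of_injective (fun _ => P) hsource).comp
    (hconst ▸ measurePreserving_sumElim (fun _ => P) fun _ => P)

lemma ae_labelIntegrable [Fintype ι] {f : (α → E) → ℝ}
    (hf : Integrable f (Measure.pi fun _ : α => P)) :
    ∀ᵐ X ∂Measure.pi fun _ : ι => P, LabelIntegrable P X f := by
  classical
  simp only [LabelIntegrable, ae_all_iff]
  intro σ hσ
  filter_upwards [ae_integrable_map_of_measurePreserving (measurePreserving_fill P hσ) hf] with X hX
  rwa [← map_fill]

section OffDiagonal

variable [MeasurableEq E] (X : ι → E)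

lemma ae_labelMeasure_eq (σ : α → Option ι) :
    ∀ᵐ u ∂labelMeasure P X σ, ∀ i, ∀ a ∈ σ i, u i = X a := by
  refine ae_all_iff.2 fun i => ?_
  cases hi : σ i with
  | none => simp
  | some b =>
    have hlaw := measurePreserving_eval (fun i => labelLaw P X (σ i)) i
    simp only [hi, labelLaw, Option.elim] at hlaw
    have hX : ∀ᵐ x ∂Measure.dirac (X b), x = X b :=
      (ae_dirac_iff (measurableSet_singleton _)).2 rfl
    filter_upwards [hlaw.quasiMeasurePreserving.ae hX] with u hu
    simpa using hu

lemma ae_labelMeasure_injective [NullSingletonClass P] {X : ι → E} (hX : Function.Injective X)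
    {σ : α → Option ι} (hσ : PartialInjective σ) :
    ∀ᵐ u ∂labelMeasure P X σ, Function.Injective u := by
  refine ae_injective_pi fun i j hij => ?_
  cases hj : σ j with
  | none => simp [labelLaw]
  | some b =>
    suffices ∀ᵐ x ∂labelLaw P X (σ i), x ≠ X b by
      filter_upwards [this] with x hx
      exact (dirac_eq_zero_iff_not_mem (measurableSet_singleton _)).2 fun h => hx h.symm
    cases hi : σ i with
    | none => exact (Set.countable_singleton (X b)).ae_notMem P
    | some a =>
      refine (ae_dirac_iff (measurableSet_singleton _).compl).2 fun hab => hij ?_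
      obtain rfl : a = b := hX hab
      exact hσ hi hj

lemma restrict_labelMeasure_injective [NullSingletonClass P] {X : ι → E}
    (hX : Function.Injective X) (σ : α → Option ι) :
    (labelMeasure P X σ).restrict {u | u.Injective} =
      if PartialInjective σ then labelMeasure P X σ else 0 := by
  split_ifs with hσ
  · exact Measure.restrict_eq_self_of_ae_mem (ae_labelMeasure_injective P hX hσ)
  · simp only [PartialInjective, not_forall] at hσ
    obtain ⟨i, i', a, hi, hi', hne⟩ := hσ
    refine Measure.restrict_eq_zero.2 (measure_eq_zero_iff_ae_notMem.2 ?_)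
    filter_upwards [ae_labelMeasure_eq P X σ] with u hu hinj
    exact hne (hinj ((hu i a hi).trans (hu i' a hi').symm))

end OffDiagonal

section EmpInt

variable {n k : ℕ} (X : Fin n → E) (ε : Fin k → Bool)

lemma pi_mixMeasure :
    Measure.pi (fun i => mixMeasure P n X (ε i)) =
      ∑ σ : Fin k → Option (Fin n) with ∀ i, (σ i).isSome = ε i,
        (∏ i, (σ i).elim n fun _ => 1 : ℝ≥0) • labelMeasure P X σ := by
  simp only [mixMeasure_eq_sum_labelLaw, pi_finsetSum, pi_smul, labelMeasure]
  congr 1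
  ext σ
  simp

variable {X} in
lemma setIntegral_pi_mixMeasure [MeasurableEq E] [NullSingletonClass P]
    (hX : Function.Injective X) {f : (Fin k → E) → ℝ} (hf : LabelIntegrable P X f) :
    ∫ u in {u | u.Injective}, f u ∂(Measure.pi fun i => mixMeasure P n X (ε i)) =
      ∑ σ : Fin k → Option (Fin n) with PartialInjective σ ∧ ∀ i, (σ i).isSome = ε i,
        (∏ i, (σ i).elim (n : ℝ) fun _ => 1) * ∫ u, f u ∂labelMeasure P X σ := by
  have hrestrict : (Measure.pi fun i => mixMeasure P n X (ε i)).restrict {u | u.Injective} =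
      ∑ σ : Fin k → Option (Fin n) with PartialInjective σ ∧ ∀ i, (σ i).isSome = ε i,
        (∏ i, (σ i).elim n fun _ => 1 : ℝ≥0) • labelMeasure P X σ := by
    rw [pi_mixMeasure, ← Measure.restrictₗ_apply, map_sum]
    simp only [Measure.restrictₗ_apply, Measure.restrict_smul,
      restrict_labelMeasure_injective P hX, smul_ite, smul_zero]
    rw [← Finset.sum_filter, Finset.filter_filter]
    simp only [and_comm]
  rw [hrestrict, integral_finsetSum_measure]
  · refine Finset.sum_congr rfl fun σ _ => ?_
    rw [integral_smul_nnreal_measure, NNReal.smul_def, smul_eq_mul, NNReal.coe_prod]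
    congr 2 with i
    cases σ i <;> simp
  · intro σ hσ
    exact (hf σ (by simp_all)).smul_measure_nnreal

lemma labelWeight_eq_of_isSome {σ : Fin k → Option (Fin n)} (hσ : ∀ i, (σ i).isSome = ε i) :
    labelWeight σ =
      (-1) ^ (Finset.univ.filter fun i => ε i = false).card *
        ∏ i, (σ i).elim (n : ℝ) fun _ => 1 := by
  rw [labelWeight, ← Finset.prod_const, Finset.prod_filter, ← Finset.prod_mul_distrib]
  refine Finset.prod_congr rfl fun i _ => ?_
  rw [← hσ]
  cases σ i <;> simp

variable {X} in
theorem empInt_eq_labelSum [MeasurableEq E] [NullSingletonClass P] (a : ℝ)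
    (hX : Function.Injective X) {f : (Fin k → E) → ℝ} (hf : LabelIntegrable P X f) :
    empInt P n a X k f = (√a)⁻¹ ^ k * labelSum P X f := by
  rw [empInt, labelSum]
  congr 1
  rw [← Finset.sum_fiberwise _ fun (σ : Fin k → Option (Fin n)) i => (σ i).isSome]
  refine Finset.sum_congr rfl fun ε _ => ?_
  rw [setIntegral_pi_mixMeasure P ε hX hf, Finset.mul_sum, Finset.filter_filter]
  simp only [funext_iff]
  refine Finset.sum_congr rfl fun σ hσ => ?_
  rw [labelTerm, labelWeight_eq_of_isSome ε (Finset.mem_filter.1 hσ).2.2, mul_assoc]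

end EmpInt

end Labellings

section SharedLabels

variable {J κ₁ κ₂ ι : Type*}

/-- The edges of the diagram `(j₁, j₂)` list the relation `R` between the two rows without
repetition. -/
def Enumerates (j₁ : J ↪ κ₁) (j₂ : J ↪ κ₂) (R : κ₁ → κ₂ → Prop) : Prop :=
  ∀ i i', R i i' ↔ ∃ s, j₁ s = i ∧ j₂ s = i'

noncomputable instance (j₁ : J ↪ κ₁) (j₂ : J ↪ κ₂) (R : κ₁ → κ₂ → Prop) :
    Decidable (Enumerates j₁ j₂ R) :=
  Classical.dec _

/-- The variables `i` and `i'` of the two rows are labelled by the same sample point. -/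
def SharesLabel (τ₁ : κ₁ → Option ι) (τ₂ : κ₂ → Option ι) (i : κ₁) (i' : κ₂) : Prop :=
  ∃ a, a ∈ τ₁ i ∧ a ∈ τ₂ i'

variable {τ₁ : κ₁ → Option ι} {τ₂ : κ₂ → Option ι}

lemma SharesLabel.eq {i : κ₁} {i' : κ₂} (h : SharesLabel τ₁ τ₂ i i') : τ₁ i = τ₂ i' := by
  obtain ⟨a, ha, ha'⟩ := h
  exact ha.trans ha'.symm

lemma SharesLabel.ne_none {i : κ₁} {i' : κ₂} (h : SharesLabel τ₁ τ₂ i i') : τ₁ i ≠ none := by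
  obtain ⟨a, ha, -⟩ := h
  exact Option.ne_none_iff_exists'.2 ⟨a, ha⟩

lemma biUnique_sharesLabel (h₁ : PartialInjective τ₁) (h₂ : PartialInjective τ₂) :
    Relator.BiUnique (SharesLabel τ₁ τ₂) := by
  constructor
  · rintro i i' k ⟨a, hi, hk⟩ ⟨b, hi', hk'⟩
    obtain rfl := Option.mem_unique hk hk'
    exact h₁ hi hi'
  · rintro i k k' ⟨a, hi, hk⟩ ⟨b, hi', hk'⟩
    obtain rfl := Option.mem_unique hi hi'
    exact h₂ hk hk'

lemma Enumerates.sharesLabel {j₁ : J ↪ κ₁} {j₂ : J ↪ κ₂}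
    (h : Enumerates j₁ j₂ (SharesLabel τ₁ τ₂)) (s : J) :
    SharesLabel τ₁ τ₂ (j₁ s) (j₂ s) :=
  (h _ _).2 ⟨s, rfl, rfl⟩

end SharedLabels

section Diagrams

variable {E J κ₁ κ₂ ι : Type*} [Fintype J] [Fintype κ₂] [DecidableEq κ₂]

/-- The second-row variables that are not the endpoint of an edge of the diagram. -/
def unmatched (j₂ : J ↪ κ₂) : Finset κ₂ :=
  {i | ∀ s, j₂ s ≠ i}

/-- The variables of the diagram `(j₁, j₂)`: the first row together with the unmatched part of the
second row, a matched second-row variable being identified with its first-row partner. -/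
abbrev DiagramVar (κ₁ : Type*) (j₂ : J ↪ κ₂) : Type _ :=
  κ₁ ⊕ {i // i ∈ unmatched j₂}

variable (j₁ : J ↪ κ₁) (j₂ : J ↪ κ₂)

open Classical in
/-- The diagram variable that stands for the second-row variable `i`. -/
noncomputable def secondRow (i : κ₂) : DiagramVar κ₁ j₂ :=
  if h : ∃ s, j₂ s = i then .inl (j₁ h.choose)
  else .inr ⟨i, by simpa [unmatched] using h⟩

/-- The function `(f ⊗ g)_{B(𝒩)}` of the variables of the diagram `𝒩 = (j₁, j₂)`. -/
noncomputable def glue (f : (κ₁ → E) → ℝ) (g : (κ₂ → E) → ℝ) (u : DiagramVar κ₁ j₂ → E) : ℝ :=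
  f (u ∘ .inl) * g (u ∘ secondRow j₁ j₂)

@[simp]
lemma secondRow_apply_matched (s : J) : secondRow j₁ j₂ (j₂ s) = .inl (j₁ s) := by
  have h : ∃ s', j₂ s' = j₂ s := ⟨s, rfl⟩
  rw [secondRow, dif_pos h, j₂.injective h.choose_spec]

@[simp]
lemma secondRow_apply_unmatched (i : {i // i ∈ unmatched j₂}) : secondRow j₁ j₂ i = .inr i :=
  dif_neg (by simpa [unmatched] using i.2)

lemma exists_eq_or_mem_unmatched (i : κ₂) : (∃ s, j₂ s = i) ∨ i ∈ unmatched j₂ := by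
  simpa [unmatched] using em (∃ s, j₂ s = i)

variable {j₁ j₂}

lemma secondRow_eq_inl_iff {i : κ₁} {i' : κ₂} :
    secondRow j₁ j₂ i' = .inl i ↔ ∃ s, j₁ s = i ∧ j₂ s = i' := by
  refine ⟨fun h => ?_, ?_⟩
  · obtain ⟨s, rfl⟩ | hi' := exists_eq_or_mem_unmatched j₂ i'
    · exact ⟨s, by simpa using h, rfl⟩
    · simp [secondRow_apply_unmatched j₁ j₂ ⟨i', hi'⟩] at h
  · rintro ⟨s, rfl, rfl⟩
    exact secondRow_apply_matched j₁ j₂ s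

lemma secondRow_injective : Function.Injective (secondRow j₁ j₂) := by
  intro i i' h
  obtain ⟨s, rfl⟩ | hi := exists_eq_or_mem_unmatched j₂ i
  · obtain ⟨s', hs, rfl⟩ := secondRow_eq_inl_iff.1 (h.symm.trans (secondRow_apply_matched j₁ j₂ s))
    rw [j₁.injective hs]
  · obtain ⟨s, rfl⟩ | hi' := exists_eq_or_mem_unmatched j₂ i'
    · obtain ⟨s', hs, rfl⟩ := secondRow_eq_inl_iff.1 (h.trans (secondRow_apply_matched j₁ j₂ s))
      rw [j₁.injective hs]
    · simpa [secondRow_apply_unmatched j₁ j₂ ⟨i, hi⟩, secondRow_apply_unmatched j₁ j₂ ⟨i', hi'⟩]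
        using h

section SplitLabelling

variable {τ₁ : κ₁ → Option ι} {τ₂ : κ₂ → Option ι}

lemma enumerates_sharesLabel_of_partialInjective {σ : DiagramVar κ₁ j₂ → Option ι}
    (hσ : PartialInjective σ) (hne : ∀ s, σ (.inl (j₁ s)) ≠ none) :
    Enumerates j₁ j₂ (SharesLabel (σ ∘ .inl) (σ ∘ secondRow j₁ j₂)) := by
  refine fun i i' => ⟨?_, ?_⟩
  · rintro ⟨a, ha, ha'⟩
    exact secondRow_eq_inl_iff.1 (hσ ha' ha)
  · rintro ⟨s, rfl, rfl⟩
    obtain ⟨a, ha⟩ := Option.ne_none_iff_exists'.1 (hne s)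
    exact ⟨a, ha, by simpa using ha⟩

lemma partialInjective_sumElim (h₁ : PartialInjective τ₁) (h₂ : PartialInjective τ₂)
    (h : Enumerates j₁ j₂ (SharesLabel τ₁ τ₂)) :
    PartialInjective (Sum.elim τ₁ (τ₂ ∘ Subtype.val) : DiagramVar κ₁ j₂ → Option ι) := by
  have hcross (i : κ₁) (i' : {i // i ∈ unmatched j₂}) (a : ι) (ha : a ∈ τ₁ i) : a ∉ τ₂ i' := by
    intro ha'
    obtain ⟨s, -, hs⟩ := (h i i').1 ⟨a, ha, ha'⟩
    exact (Finset.mem_filter.1 i'.2).2 s hs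
  rintro (i | i) (i' | i') a ha ha'
  · exact congrArg _ (h₁ ha ha')
  · exact (hcross i i' a ha ha').elim
  · exact (hcross i' i a ha' ha).elim
  · exact congrArg _ (Subtype.ext (h₂ ha ha'))

lemma sumElim_comp_secondRow {A : Type*} {u : κ₁ → A} {v : κ₂ → A} (h : ∀ s, u (j₁ s) = v (j₂ s)) :
    Sum.elim u (v ∘ Subtype.val) ∘ secondRow j₁ j₂ = v := by
  ext1 i
  obtain ⟨s, rfl⟩ | hi := exists_eq_or_mem_unmatched j₂ i
  · simp [h]
  · simp [secondRow_apply_unmatched j₁ j₂ ⟨i, hi⟩]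

lemma sumElim_comp_inl_comp_secondRow {A : Type*} (u : DiagramVar κ₁ j₂ → A) :
    Sum.elim (u ∘ .inl) (u ∘ secondRow j₁ j₂ ∘ Subtype.val) = u := by
  ext1 (i | i) <;> simp

variable [Fintype κ₁]

lemma sum_labellings_eq_sum_pairs [DecidableEq κ₁] [Fintype ι] {M : Type*} [AddCommMonoid M]
    [DecidablePred fun σ : DiagramVar κ₁ j₂ → Option ι => ∀ s, σ (.inl (j₁ s)) ≠ none]
    (F : (DiagramVar κ₁ j₂ → Option ι) → M) :
    ∑ σ with PartialInjective σ ∧ ∀ s, σ (.inl (j₁ s)) ≠ none, F σ =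
      ∑ τ : (κ₁ → Option ι) × (κ₂ → Option ι) with
        PartialInjective τ.1 ∧ PartialInjective τ.2 ∧ Enumerates j₁ j₂ (SharesLabel τ.1 τ.2),
        F (Sum.elim τ.1 (τ.2 ∘ Subtype.val)) := by
  classical
  refine Finset.sum_nbij' (fun σ => (σ ∘ .inl, σ ∘ secondRow j₁ j₂))
    (fun τ => Sum.elim τ.1 (τ.2 ∘ Subtype.val)) ?_ ?_ ?_ ?_ ?_
  · intro σ hσ
    obtain ⟨hinj, hne⟩ := (Finset.mem_filter.1 hσ).2
    exact Finset.mem_filter.2 ⟨Finset.mem_univ _, hinj.comp Sum.inl_injective,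
      hinj.comp secondRow_injective, enumerates_sharesLabel_of_partialInjective hinj hne⟩
  · intro τ hτ
    obtain ⟨h₁, h₂, h⟩ := (Finset.mem_filter.1 hτ).2
    exact Finset.mem_filter.2 ⟨Finset.mem_univ _, partialInjective_sumElim h₁ h₂ h,
      fun s => (h.sharesLabel s).ne_none⟩
  · exact fun σ _ => sumElim_comp_inl_comp_secondRow σ
  · intro τ hτ
    have h := (Finset.mem_filter.1 hτ).2.2.2
    exact Prod.ext rfl (sumElim_comp_secondRow fun s => (h.sharesLabel s).eq)
  · exact fun σ _ => congrArg F (sumElim_comp_inl_comp_secondRow σ).symm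

lemma labelWeight_sumElim [Fintype ι] (h : ∀ s, τ₂ (j₂ s) ≠ none) :
    labelWeight (Sum.elim τ₁ (τ₂ ∘ Subtype.val) : DiagramVar κ₁ j₂ → Option ι) =
      labelWeight τ₁ * labelWeight τ₂ := by
  simp only [labelWeight, Fintype.prod_sum_type, Sum.elim_inl, Sum.elim_inr, Function.comp_apply]
  congr 1
  rw [Finset.prod_coe_sort (unmatched j₂) fun i => (τ₂ i).elim (-(Fintype.card ι : ℝ)) fun _ => 1]
  refine Finset.prod_subset (Finset.subset_univ _) fun i _ hi => ?_
  obtain ⟨s, rfl⟩ := (exists_eq_or_mem_unmatched j₂ i).resolve_right hi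
  obtain ⟨a, ha⟩ := Option.ne_none_iff_exists'.1 (h s)
  simp [ha]

variable [MeasurableSpace E] [MeasurableEq E] (P : Measure E) [IsProbabilityMeasure P]
  {X : ι → E} {f : (κ₁ → E) → ℝ} {g : (κ₂ → E) → ℝ}

lemma integral_glue_labelMeasure (h : ∀ s, SharesLabel τ₁ τ₂ (j₁ s) (j₂ s))
    (hfg : AEStronglyMeasurable (glue j₁ j₂ f g)
      (labelMeasure P X (Sum.elim τ₁ (τ₂ ∘ Subtype.val)))) :
    ∫ u, glue j₁ j₂ f g u ∂labelMeasure P X (Sum.elim τ₁ (τ₂ ∘ Subtype.val)) =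
      (∫ x, f x ∂labelMeasure P X τ₁) * ∫ y, g y ∂labelMeasure P X τ₂ := by
  have hφ := (measurePreserving_labelMeasure_sumElim P X τ₁ (τ₂ ∘ Subtype.val)).comp
    ((MeasurePreserving.id (labelMeasure P X τ₁)).prod
      (measurePreserving_labelMeasure_comp P X τ₂
        (Subtype.val_injective (p := (· ∈ unmatched j₂)))))
  rw [← hφ.map_eq, integral_map hφ.aemeasurable (hφ.map_eq ▸ hfg), ← integral_prod_mul]
  refine integral_congr_ae ?_
  filter_upwards [Measure.quasiMeasurePreserving_fst.ae (ae_labelMeasure_eq P X τ₁),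
    Measure.quasiMeasurePreserving_snd.ae (ae_labelMeasure_eq P X τ₂)] with z hz₁ hz₂
  have hz (s : J) : z.1 (j₁ s) = z.2 (j₂ s) := by
    obtain ⟨a, ha₁, ha₂⟩ := h s
    exact (hz₁ _ a ha₁).trans (hz₂ _ a ha₂).symm
  exact congrArg (fun y => f z.1 * g y) (sumElim_comp_secondRow hz)

lemma labelTerm_glue [Fintype ι] (h : ∀ s, SharesLabel τ₁ τ₂ (j₁ s) (j₂ s))
    (hfg : AEStronglyMeasurable (glue j₁ j₂ f g)
      (labelMeasure P X (Sum.elim τ₁ (τ₂ ∘ Subtype.val)))) :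
    labelTerm P X (glue j₁ j₂ f g) (Sum.elim τ₁ (τ₂ ∘ Subtype.val)) =
      labelTerm P X f τ₁ * labelTerm P X g τ₂ := by
  rw [labelTerm, integral_glue_labelMeasure P h hfg,
    labelWeight_sumElim fun s => (h s).eq ▸ (h s).ne_none, labelTerm, labelTerm, mul_mul_mul_comm]

end SplitLabelling

end Diagrams

section IntegrateOut

variable {E α β γ ι : Type*}

lemma PartialInjective.sumElim_none {τ : α → Option ι} (hτ : PartialInjective τ) :
    PartialInjective (Sum.elim τ fun _ : γ => none) := by
  rintro (i | i) (i' | i') a ha ha'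
  · exact congrArg _ (hτ ha ha')
  all_goals simp at ha ha'

variable {e : β → α ⊕ γ}

lemma sum_labellings_integrateOut [Fintype α] [DecidableEq α] [Fintype β] [DecidableEq β]
    [Fintype ι] (he : Function.Injective e) (hsurj : ∀ a, ∃ b, e b = .inl a) {M : Type*}
    [AddCommMonoid M] (F : (β → Option ι) → M) :
    ∑ τ : α → Option ι with PartialInjective τ, F (Sum.elim τ (fun _ => none) ∘ e) =
      ∑ σ with PartialInjective σ ∧ ∀ b, (e b).isRight → σ b = none, F σ := by
  choose s hs using hsurj
  have hs_inj : Function.Injective s := fun a a' h => Sum.inl_injective (by rw [← hs, ← hs, h])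
  refine Finset.sum_nbij' (fun τ => Sum.elim τ (fun _ => none) ∘ e) (· ∘ s) ?_ ?_ ?_ ?_
    fun _ _ => rfl
  · intro τ hτ
    refine Finset.mem_filter.2 ⟨Finset.mem_univ _,
      (Finset.mem_filter.1 hτ).2.sumElim_none.comp he, fun b hb => ?_⟩
    obtain ⟨c, hc⟩ := Sum.isRight_iff.1 hb
    simp [hc]
  · intro σ hσ
    exact Finset.mem_filter.2 ⟨Finset.mem_univ _, (Finset.mem_filter.1 hσ).2.1.comp hs_inj⟩
  · intro τ _
    ext1 a
    simp [hs]
  · intro σ hσ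
    ext1 b
    cases hb : e b with
    | inl a => simp [hb, he ((hs a).trans hb.symm)]
    | inr c => simp [hb, (Finset.mem_filter.1 hσ).2.2 b (by simp [hb])]

lemma labelWeight_sumElim_none_comp [Fintype α] [Fintype β] [Finite γ] [Fintype ι]
    (he : Function.Injective e) (hsurj : ∀ a, ∃ b, e b = .inl a) (τ : α → Option ι) :
    labelWeight (Sum.elim τ (fun _ => none) ∘ e) =
      (-(Fintype.card ι : ℝ)) ^ (Finset.univ.filter fun b => (e b).isRight).card *
        labelWeight τ := by
  have := Fintype.ofFinite γ
  let weight : Option ι → ℝ := fun o => o.elim (-(Fintype.card ι : ℝ)) fun _ => 1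
  have hleft : ∏ b, Sum.elim (weight ∘ τ) (fun _ => 1) (e b) = labelWeight τ := by
    rw [Fintype.prod_of_injective e he _ (Sum.elim (weight ∘ τ) fun _ => 1) _ fun _ => rfl]
    · simp [Fintype.prod_sum_type, labelWeight, weight]
    · rintro (a | c) h
      · exact (h (hsurj a)).elim
      · rfl
  rw [← hleft, ← Finset.prod_const, Finset.prod_filter, ← Finset.prod_mul_distrib]
  refine Finset.prod_congr rfl fun b _ => ?_
  cases hb : e b <;> simp [hb, weight]

variable [MeasurableSpace E] [Fintype α] [Fintype β] [Fintype γ] (P : Measure E)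

/-- The function of the variables `α` obtained from `F` by integrating out with respect to `P`
those of its variables that `e` sends to `γ`. -/
noncomputable def integrateOut (e : β → α ⊕ γ) (F : (β → E) → ℝ) (v : α → E) : ℝ :=
  ∫ w : γ → E, F (Sum.elim v w ∘ e) ∂Measure.pi fun _ => P

variable [IsProbabilityMeasure P] {X : ι → E} {F : (β → E) → ℝ}

lemma measurePreserving_sumElim_comp (X : ι → E) (he : Function.Injective e) (τ : α → Option ι) :
    MeasurePreserving (fun z : (α → E) × (γ → E) => Sum.elim z.1 z.2 ∘ e)
      ((labelMeasure P X τ).prod (Measure.pi fun _ => P))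
      (labelMeasure P X (Sum.elim τ (fun _ => none) ∘ e)) :=
  (measurePreserving_labelMeasure_comp P X _ he).comp
    (measurePreserving_labelMeasure_sumElim P X τ fun _ : γ => none)

lemma LabelIntegrable.integrateOut (he : Function.Injective e) (hF : LabelIntegrable P X F) :
    LabelIntegrable P X (integrateOut P e F) := fun τ hτ =>
  ((measurePreserving_sumElim_comp P X he τ).integrable_comp_of_integrable
    (hF _ (hτ.sumElim_none.comp he))).integral_prod_left

lemma integral_integrateOut (he : Function.Injective e) {τ : α → Option ι}
    (hF : Integrable F (labelMeasure P X (Sum.elim τ (fun _ => none) ∘ e))) :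
    ∫ v, integrateOut P e F v ∂labelMeasure P X τ =
      ∫ u, F u ∂labelMeasure P X (Sum.elim τ (fun _ => none) ∘ e) := by
  have hφ := measurePreserving_sumElim_comp P X he τ
  simp only [EmpiricalDiagram.integrateOut]
  rw [← hφ.map_eq, integral_map hφ.aemeasurable (hφ.map_eq ▸ hF.aestronglyMeasurable)]
  exact (integral_prod _ (hφ.integrable_comp_of_integrable hF)).symm

lemma labelSum_integrateOut [DecidableEq α] [DecidableEq β] [Fintype ι]
    (he : Function.Injective e) (hsurj : ∀ a, ∃ b, e b = .inl a) (hF : LabelIntegrable P X F) :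
    (-(Fintype.card ι : ℝ)) ^ (Finset.univ.filter fun b => (e b).isRight).card *
        labelSum P X (integrateOut P e F) =
      ∑ σ with PartialInjective σ ∧ ∀ b, (e b).isRight → σ b = none, labelTerm P X F σ := by
  rw [← sum_labellings_integrateOut he hsurj, labelSum, Finset.mul_sum]
  refine Finset.sum_congr rfl fun τ hτ => ?_
  have hτ := (Finset.mem_filter.1 hτ).2
  rw [labelTerm, labelTerm, labelWeight_sumElim_none_comp he hsurj,
    integral_integrateOut P he (hF _ (hτ.sumElim_none.comp he)), mul_assoc]

end IntegrateOut

section Coloring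

section Uncolored

variable {J κ : Type*} [Fintype κ] [DecidableEq κ]

/-- The variables that are not the endpoint of an edge in `S`. With `j` the first row of a diagram
and `S` its colored edges, these are the first-row variables that are not integrated out. -/
def uncolored (j : J ↪ κ) (S : Finset J) : Finset κ :=
  {i | ∀ s ∈ S, j s ≠ i}

lemma notMem_uncolored {j : J ↪ κ} {S : Finset J} {i : κ} :
    i ∉ uncolored j S ↔ ∃ s ∈ S, j s = i := by
  simp [uncolored]

lemma card_uncolored_add_card (j : J ↪ κ) (S : Finset J) :
    (uncolored j S).card + S.card = Fintype.card κ := by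
  have : uncolored j S = (S.map j)ᶜ := by ext; simp [uncolored]
  rw [this, ← S.card_map j, Finset.card_compl_add_card]

lemma card_unmatched_add_card [Fintype J] (j : J ↪ κ) :
    (unmatched j).card + Fintype.card J = Fintype.card κ := by
  have : unmatched j = uncolored j Finset.univ := by ext; simp [unmatched, uncolored]
  rw [this, ← Finset.card_univ, card_uncolored_add_card]

end Uncolored

/-- The enumeration of the disjoint union of `A` and `B` that lists first `A` and then `B`, each in
increasing order. -/
noncomputable def listSum {k₁ k₂ K : ℕ} (A : Finset (Fin k₁)) (B : Finset (Fin k₂))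
    (hK : A.card + B.card = K) : {i // i ∈ A} ⊕ {i // i ∈ B} ≃ Fin K :=
  ((A.orderIsoOfFin rfl).symm.toEquiv.sumCongr (B.orderIsoOfFin rfl).symm.toEquiv).trans
    (finSumFinEquiv.trans (finCongr hK))

variable {k₁ k₂ l K : ℕ} (j₁ : Fin l ↪ Fin k₁) (j₂ : Fin l ↪ Fin k₂) (S : Finset (Fin l))

/-- The way `coloredFun` arranges the variables of the diagram `(j₁, j₂)` with colored edges `S`:
the colored ones are sent to the integration variables `Fin k₁`, the others to the arguments
`Fin K`. -/
noncomputable def layout (hK : (uncolored j₁ S).card + (unmatched j₂).card = K) :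
    DiagramVar (Fin k₁) j₂ → Fin K ⊕ Fin k₁
  | .inl i => if hi : i ∈ uncolored j₁ S then .inl (listSum _ _ hK (.inl ⟨i, hi⟩)) else .inr i
  | .inr i => .inl (listSum _ _ hK (.inr i))

section Layout

variable {j₁ j₂ S} {hK : (uncolored j₁ S).card + (unmatched j₂).card = K}

lemma layout_injective : Function.Injective (layout j₁ j₂ S hK) := by
  rintro (i | i) (i' | i') h
  · by_cases hi : i ∈ uncolored j₁ S <;> by_cases hi' : i' ∈ uncolored j₁ S <;>
      simp_all [layout]
  · by_cases hi : i ∈ uncolored j₁ S <;> simp [layout, hi] at h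
  · by_cases hi' : i' ∈ uncolored j₁ S <;> simp [layout, hi'] at h
  · simpa [layout] using h

lemma exists_layout_eq_inl (t : Fin K) : ∃ b, layout j₁ j₂ S hK b = .inl t := by
  obtain ⟨i | i, rfl⟩ := (listSum _ _ hK).surjective t
  · exact ⟨.inl i, by simp [layout]⟩
  · exact ⟨.inr i, rfl⟩

lemma isRight_layout_iff {b : DiagramVar (Fin k₁) j₂} :
    (layout j₁ j₂ S hK b).isRight ↔ ∃ s ∈ S, .inl (j₁ s) = b := by
  cases b with
  | inl i =>
    simp only [Sum.inl.injEq, ← notMem_uncolored]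
    by_cases hi : i ∈ uncolored j₁ S <;> simp [layout, hi]
  | inr i => simp [layout]

lemma card_isRight_layout :
    (Finset.univ.filter fun b => (layout j₁ j₂ S hK b).isRight).card = S.card := by
  rw [← S.card_map (j₁.trans .inl)]
  congr 1
  ext b
  simp [isRight_layout_iff]

section Elim

variable {E : Type*} (v : Fin K → E) (w : Fin k₁ → E)

lemma elim_layout_inl {A : Finset (Fin k₁)} (hA : A = uncolored j₁ S) (i : Fin k₁) :
    Sum.elim v w (layout j₁ j₂ S hK (.inl i)) =
      if hi : i ∈ A ∧ A.card ≤ K then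
        v (Fin.castLE hi.2 ((A.orderIsoOfFin rfl).symm ⟨i, hi.1⟩))
      else w i := by
  subst hA
  by_cases hi : i ∈ uncolored j₁ S
  · rw [dif_pos ⟨hi, by omega⟩]
    simp only [layout, dif_pos hi]
    rfl
  · rw [dif_neg fun h => hi h.1]
    simp [layout, hi]

lemma elim_layout_inr {A : Finset (Fin k₁)} {B : Finset (Fin k₂)} (hA : A = uncolored j₁ S)
    (hB : B = unmatched j₂) {i : Fin k₂} (hi : i ∈ B)
    (hlt : A.card + (B.orderIsoOfFin rfl).symm ⟨i, hi⟩ < K) :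
    Sum.elim v w (layout j₁ j₂ S hK (.inr ⟨i, hB ▸ hi⟩)) =
      v ⟨A.card + (B.orderIsoOfFin rfl).symm ⟨i, hi⟩, hlt⟩ := by
  subst hA hB
  rfl

end Elim

end Layout

lemma coloredFun_eq_integrateOut {E : Type*} [MeasurableSpace E] [Nonempty E] (P : Measure E)
    {p : ℕ} (hK : (uncolored j₁ S).card + (unmatched j₂).card = k₁ + k₂ - l - p)
    (f : (Fin k₁ → E) → ℝ) (g : (Fin k₂ → E) → ℝ) :
    coloredFun P k₁ k₂ l p j₁ j₂ S f g =
      integrateOut P (layout j₁ j₂ S hK) (glue j₁ j₂ f g) := by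
  have hA : (Finset.univ.filter fun i => ∀ s ∈ S, j₁ s ≠ i) = uncolored j₁ S := by
    ext; simp [uncolored]
  have hB : (Finset.univ.filter fun i => ∀ s, j₂ s ≠ i) = unmatched j₂ := by
    ext; simp [unmatched]
  ext v
  refine integral_congr_ae (.of_forall fun w => congrArg₂ (· * ·)
    (congrArg f (funext fun i => (elim_layout_inl v w hA i).symm))
    (congrArg g (funext fun i => ?_)))
  by_cases hm : ∃ s, j₂ s = i
  · rw [dif_pos hm, Function.comp_apply]
    conv_rhs => rw [← hm.choose_spec, secondRow_apply_matched]
    exact (elim_layout_inl v w hA _).symm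
  · have hi : i ∈ unmatched j₂ := (exists_eq_or_mem_unmatched j₂ i).resolve_left hm
    rw [dif_neg hm, dif_pos ⟨hB ▸ hi, by rw [hA, hB, hK]⟩, Function.comp_apply,
      secondRow_apply_unmatched j₁ j₂ ⟨i, hi⟩]
    exact (elim_layout_inr v w hA hB _ _).symm

lemma sum_filter_forall_not {A J R : Type*} [Finite A] [Fintype J] [CommRing R] (s : Finset A)
    (Q : J → A → Prop) [DecidablePred fun a => ∀ i, ¬Q i a]
    [∀ S : Finset J, DecidablePred fun a => ∀ i ∈ S, Q i a] (F : A → R) :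
    ∑ a ∈ s with ∀ i, ¬Q i a, F a =
      ∑ S : Finset J, (-1) ^ S.card * ∑ a ∈ s with ∀ i ∈ S, Q i a, F a := by
  classical
  have := Fintype.ofFinite A
  have hcompl : (Finset.univ.inf fun i => (Finset.univ.filter (Q i))ᶜ) =
      Finset.univ.filter fun a => ∀ i, ¬Q i a := by
    ext; simp [Finset.mem_inf]
  have hinter (S : Finset J) : (S.inf fun i => Finset.univ.filter (Q i)) =
      Finset.univ.filter fun a => ∀ i ∈ S, Q i a := by
    ext; simp [Finset.mem_inf]
  have h := Finset.inclusion_exclusion_sum_inf_compl Finset.univ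
    (fun i => Finset.univ.filter (Q i)) fun a => if a ∈ s then F a else 0
  rw [hcompl] at h
  simpa [hinter, Finset.inter_comm _ s, Finset.inter_filter, zsmul_eq_mul,
    -Finset.compl_filter] using h

variable {E : Type*} [MeasurableSpace E] [Nonempty E] (P : Measure E)
  [IsProbabilityMeasure P] {n : ℕ} {X : Fin n → E} {f : (Fin k₁ → E) → ℝ} {g : (Fin k₂ → E) → ℝ}

lemma card_uncolored_add_card_unmatched :
    (uncolored j₁ S).card + (unmatched j₂).card = k₁ + k₂ - l - S.card := by
  have h₁ := card_uncolored_add_card j₁ S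
  have h₂ := card_unmatched_add_card j₂
  simp only [Fintype.card_fin] at h₁ h₂
  omega

lemma LabelIntegrable.coloredFun (hfg : LabelIntegrable P X (glue j₁ j₂ f g)) :
    LabelIntegrable P X (coloredFun P k₁ k₂ l S.card j₁ j₂ S f g) := by
  rw [coloredFun_eq_integrateOut j₁ j₂ S P (card_uncolored_add_card_unmatched j₁ j₂ S)]
  exact hfg.integrateOut P layout_injective

lemma pow_card_mul_labelSum_coloredFun (hfg : LabelIntegrable P X (glue j₁ j₂ f g)) :
    (n : ℝ) ^ S.card * labelSum P X (_root_.coloredFun P k₁ k₂ l S.card j₁ j₂ S f g) =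
      (-1) ^ S.card * ∑ σ with PartialInjective σ ∧ ∀ s ∈ S, σ (.inl (j₁ s)) = none,
        labelTerm P X (glue j₁ j₂ f g) σ := by
  have hK := card_uncolored_add_card_unmatched j₁ j₂ S
  have h := labelSum_integrateOut P (layout_injective (hK := hK)) exists_layout_eq_inl hfg
  rw [card_isRight_layout] at h
  simp only [isRight_layout_iff, forall_exists_index, and_imp,
    forall_apply_eq_imp_iff₂, Fintype.card_fin] at h
  rw [coloredFun_eq_integrateOut j₁ j₂ S P hK, ← h, ← mul_assoc, ← mul_pow, neg_one_mul, neg_neg]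

/-- Inclusion–exclusion over the colored edges removes the labellings that leave the endpoints of
an edge unlabelled. -/
lemma sum_coloredFun_eq_sum_pairs [MeasurableEq E] (hfg : LabelIntegrable P X (glue j₁ j₂ f g)) :
    ∑ S : Finset (Fin l),
        (n : ℝ) ^ S.card * labelSum P X (_root_.coloredFun P k₁ k₂ l S.card j₁ j₂ S f g) =
      ∑ τ : (Fin k₁ → Option (Fin n)) × (Fin k₂ → Option (Fin n)) with
        PartialInjective τ.1 ∧ PartialInjective τ.2 ∧ Enumerates j₁ j₂ (SharesLabel τ.1 τ.2),
        labelTerm P X f τ.1 * labelTerm P X g τ.2 := by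
  have hie := sum_filter_forall_not
    (Finset.univ.filter (PartialInjective (α := DiagramVar (Fin k₁) j₂) (ι := Fin n)))
    (fun (s : Fin l) σ => σ (.inl (j₁ s)) = none) (labelTerm P X (glue j₁ j₂ f g))
  simp only [Finset.filter_filter] at hie
  simp only [pow_card_mul_labelSum_coloredFun j₁ j₂ _ P hfg]
  refine (hie.symm.trans (sum_labellings_eq_sum_pairs _)).trans ?_
  refine Finset.sum_congr rfl fun τ hτ => ?_
  obtain ⟨h₁, h₂, h⟩ := (Finset.mem_filter.1 hτ).2
  exact labelTerm_glue P h.sharesLabel (hfg _ (partialInjective_sumElim h₁ h₂ h)).1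

end Coloring

section Enumerations

variable {J κ₁ κ₂ : Type*} {R : κ₁ → κ₂ → Prop}

lemma injective_fst_of_biUnique (hR : Relator.BiUnique R) :
    Function.Injective fun p : {p : κ₁ × κ₂ // R p.1 p.2} => p.1.1 := by
  rintro ⟨⟨i, k⟩, h⟩ ⟨⟨i', k'⟩, h'⟩ (rfl : i = i')
  exact Subtype.ext (Prod.ext rfl (hR.2 h h'))

lemma injective_snd_of_biUnique (hR : Relator.BiUnique R) :
    Function.Injective fun p : {p : κ₁ × κ₂ // R p.1 p.2} => p.1.2 := by
  rintro ⟨⟨i, k⟩, h⟩ ⟨⟨i', k'⟩, h'⟩ (rfl : k = k')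
  exact Subtype.ext (Prod.ext (hR.1 h h') rfl)

/-- The diagrams that enumerate a partial matching `R` are the bijections of the edge set with
the set of pairs matched by `R`. -/
noncomputable def enumerationEquiv (hR : Relator.BiUnique R) :
    {j : (J ↪ κ₁) × (J ↪ κ₂) // Enumerates j.1 j.2 R} ≃
      (J ≃ {p : κ₁ × κ₂ // R p.1 p.2}) where
  toFun j := Equiv.ofBijective (fun s => ⟨(j.1.1 s, j.1.2 s), (j.2 _ _).2 ⟨s, rfl, rfl⟩⟩)
    ⟨fun _ _ h => j.1.1.injective (congrArg (·.1.1) h), fun ⟨⟨i, i'⟩, h⟩ => by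
      obtain ⟨s, rfl, rfl⟩ := (j.2 i i').1 h
      exact ⟨s, rfl⟩⟩
  invFun e := ⟨(e.toEmbedding.trans ⟨_, injective_fst_of_biUnique hR⟩,
    e.toEmbedding.trans ⟨_, injective_snd_of_biUnique hR⟩), fun i i' => by
      refine ⟨fun h => ⟨e.symm ⟨(i, i'), h⟩, by simp, by simp⟩, ?_⟩
      rintro ⟨s, rfl, rfl⟩
      exact (e s).2⟩
  left_inv _ := rfl
  right_inv _ := Equiv.ext fun _ => rfl

lemma sum_inv_factorial_mul_card_enumerates [Fintype κ₁] [Fintype κ₂]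
    (hR : Relator.BiUnique R) :
    ∑ l ∈ Finset.range (min (Fintype.card κ₁) (Fintype.card κ₂) + 1), (l.factorial : ℝ)⁻¹ *
      ({j | Enumerates j.1 j.2 R} : Finset ((Fin l ↪ κ₁) × (Fin l ↪ κ₂))).card = 1 := by
  classical
  set m := Fintype.card {p : κ₁ × κ₂ // R p.1 p.2}
  have hm : m ≤ min (Fintype.card κ₁) (Fintype.card κ₂) :=
    le_min (Fintype.card_le_of_injective _ (injective_fst_of_biUnique hR))
      (Fintype.card_le_of_injective _ (injective_snd_of_biUnique hR))
  have hcard (l : ℕ) :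
      ({j | Enumerates j.1 j.2 R} : Finset ((Fin l ↪ κ₁) × (Fin l ↪ κ₂))).card =
        Fintype.card (Fin l ≃ {p : κ₁ × κ₂ // R p.1 p.2}) := by
    rw [← Fintype.card_subtype, Fintype.card_congr (enumerationEquiv hR)]
  simp only [hcard]
  rw [Finset.sum_eq_single m]
  · rw [Fintype.card_equiv (Fintype.equivFin _).symm, Fintype.card_fin]
    exact inv_mul_cancel₀ (by positivity)
  · intro l _ hl
    have : IsEmpty (Fin l ≃ {p : κ₁ × κ₂ // R p.1 p.2}) :=
      ⟨fun e => hl (by simpa using Fintype.card_congr e)⟩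
    simp
  · exact fun h => absurd (Finset.mem_range_succ_iff.2 hm) h

/-- The diagrams enumerating the coincidences of a pair of labellings form a partition of unity. -/
lemma labelSum_mul_labelSum {E ι : Type*} [MeasurableSpace E] [Fintype κ₁] [Fintype κ₂]
    [DecidableEq κ₁] [DecidableEq κ₂] [Fintype ι] (P : Measure E) (X : ι → E)
    (f : (κ₁ → E) → ℝ) (g : (κ₂ → E) → ℝ) :
    labelSum P X f * labelSum P X g =
      ∑ l ∈ Finset.range (min (Fintype.card κ₁) (Fintype.card κ₂) + 1), (l.factorial : ℝ)⁻¹ *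
        ∑ j : (Fin l ↪ κ₁) × (Fin l ↪ κ₂),
          ∑ τ : (κ₁ → Option ι) × (κ₂ → Option ι) with
            PartialInjective τ.1 ∧ PartialInjective τ.2 ∧ Enumerates j.1 j.2 (SharesLabel τ.1 τ.2),
            labelTerm P X f τ.1 * labelTerm P X g τ.2 := by
  have hunity (τ : (κ₁ → Option ι) × (κ₂ → Option ι))
      (hτ : PartialInjective τ.1 ∧ PartialInjective τ.2) :
      labelTerm P X f τ.1 * labelTerm P X g τ.2 =
        ∑ l ∈ Finset.range (min (Fintype.card κ₁) (Fintype.card κ₂) + 1), (l.factorial : ℝ)⁻¹ *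
          ∑ j : (Fin l ↪ κ₁) × (Fin l ↪ κ₂), if Enumerates j.1 j.2 (SharesLabel τ.1 τ.2) then
            labelTerm P X f τ.1 * labelTerm P X g τ.2 else 0 := by
    have h := sum_inv_factorial_mul_card_enumerates (biUnique_sharesLabel hτ.1 hτ.2)
    simp only [← Finset.sum_filter, Finset.sum_const, nsmul_eq_mul, ← mul_assoc]
    rw [← Finset.sum_mul, ← Finset.sum_mul, h, one_mul]
  calc
    _ = ∑ τ : (κ₁ → Option ι) × (κ₂ → Option ι) with
          PartialInjective τ.1 ∧ PartialInjective τ.2,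
          labelTerm P X f τ.1 * labelTerm P X g τ.2 := by
      rw [labelSum, labelSum, Finset.sum_mul_sum, ← Finset.sum_product', ← Finset.filter_product,
        Finset.univ_product_univ]
    _ = _ := by
      rw [Finset.sum_congr rfl fun τ hτ => hunity τ (Finset.mem_filter.1 hτ).2, Finset.sum_comm]
      refine Finset.sum_congr rfl fun l _ => ?_
      rw [← Finset.mul_sum, Finset.sum_comm]
      refine congrArg _ (Finset.sum_congr rfl fun j _ => ?_)
      simp only [← and_assoc, ← Finset.filter_filter, Finset.sum_filter _ (s := Finset.filter _ _)]

end Enumerations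

section Linearity

variable {E α ι κ : Type*} [MeasurableSpace E] [Fintype α] {P : Measure E} {X : ι → E}

lemma LabelIntegrable.const_mul {f : (α → E) → ℝ} (hf : LabelIntegrable P X f) (c : ℝ) :
    LabelIntegrable P X fun u => c * f u :=
  fun σ hσ => (hf σ hσ).const_mul c

lemma LabelIntegrable.finsetSum {s : Finset κ} {f : κ → (α → E) → ℝ}
    (hf : ∀ i ∈ s, LabelIntegrable P X (f i)) : LabelIntegrable P X fun u => ∑ i ∈ s, f i u :=
  fun σ hσ => integrable_finsetSum _ fun i hi => hf i hi σ hσ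

variable [DecidableEq α] [Fintype ι]

lemma labelSum_const_mul (c : ℝ) (f : (α → E) → ℝ) :
    labelSum P X (fun u => c * f u) = c * labelSum P X f := by
  simp only [labelSum, labelTerm, integral_const_mul, Finset.mul_sum, mul_left_comm]

lemma labelSum_finsetSum {s : Finset κ} {f : κ → (α → E) → ℝ}
    (hf : ∀ i ∈ s, LabelIntegrable P X (f i)) :
    labelSum P X (fun u => ∑ i ∈ s, f i u) = ∑ i ∈ s, labelSum P X (f i) := by
  simp only [labelSum]
  rw [Finset.sum_comm]
  refine Finset.sum_congr rfl fun σ hσ => ?_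
  simp only [labelTerm]
  rw [integral_finsetSum _ fun i hi => hf i hi σ (Finset.mem_filter.1 hσ).2, Finset.mul_sum]

end Linearity

section Average

variable {E : Type*} [MeasurableSpace E] [Nonempty E] (P : Measure E) [IsProbabilityMeasure P]
  {k₁ k₂ l n : ℕ} {X : Fin n → E} {f : (Fin k₁ → E) → ℝ} {g : (Fin k₂ → E) → ℝ}

lemma labelIntegrable_coloredFun_of_mem_powersetCard {j₁ : Fin l ↪ Fin k₁} {j₂ : Fin l ↪ Fin k₂}
    (hfg : LabelIntegrable P X (glue j₁ j₂ f g)) {p : ℕ} {S : Finset (Fin l)}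
    (hS : S ∈ Finset.powersetCard p Finset.univ) :
    LabelIntegrable P X (coloredFun P k₁ k₂ l p j₁ j₂ S f g) := by
  obtain rfl := (Finset.mem_powersetCard.1 hS).2
  exact hfg.coloredFun j₁ j₂ S P

lemma labelIntegrable_avgColored
    (hfg : ∀ (j₁ : Fin l ↪ Fin k₁) (j₂ : Fin l ↪ Fin k₂), LabelIntegrable P X (glue j₁ j₂ f g))
    (p : ℕ) : LabelIntegrable P X (avgColored P k₁ k₂ l p f g) :=
  .const_mul (.finsetSum fun j₁ _ => .finsetSum fun j₂ _ => .finsetSum fun _ hS =>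
    labelIntegrable_coloredFun_of_mem_powersetCard P (hfg j₁ j₂) hS) _

lemma labelSum_avgColored
    (hfg : ∀ (j₁ : Fin l ↪ Fin k₁) (j₂ : Fin l ↪ Fin k₂), LabelIntegrable P X (glue j₁ j₂ f g))
    (p : ℕ) :
    labelSum P X (avgColored P k₁ k₂ l p f g) =
      ((Fintype.card (Fin l ↪ Fin k₁) * Fintype.card (Fin l ↪ Fin k₂) *
        (Finset.powersetCard p (Finset.univ : Finset (Fin l))).card : ℕ) : ℝ)⁻¹ *
      ∑ j₁ : Fin l ↪ Fin k₁, ∑ j₂ : Fin l ↪ Fin k₂, ∑ S ∈ Finset.powersetCard p Finset.univ,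
        labelSum P X (coloredFun P k₁ k₂ l p j₁ j₂ S f g) := by
  have hint (j₁ : Fin l ↪ Fin k₁) (j₂ : Fin l ↪ Fin k₂) (S)
      (hS : S ∈ Finset.powersetCard p Finset.univ) :
      LabelIntegrable P X (coloredFun P k₁ k₂ l p j₁ j₂ S f g) :=
    labelIntegrable_coloredFun_of_mem_powersetCard P (hfg j₁ j₂) hS
  unfold avgColored
  rw [labelSum_const_mul,
    labelSum_finsetSum fun j₁ _ => .finsetSum fun j₂ _ => .finsetSum (hint j₁ j₂)]
  refine congrArg _ (Finset.sum_congr rfl fun j₁ _ => ?_)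
  rw [labelSum_finsetSum fun j₂ _ => .finsetSum (hint j₁ j₂)]
  exact Finset.sum_congr rfl fun j₂ _ => labelSum_finsetSum (hint j₁ j₂)

lemma sum_pow_mul_sum_powersetCard {R : Type*} [CommSemiring R] (x : R)
    (F : ℕ → Finset (Fin l) → R) :
    ∑ p ∈ Finset.range (l + 1), x ^ p * ∑ S ∈ Finset.powersetCard p Finset.univ, F p S =
      ∑ S : Finset (Fin l), x ^ S.card * F S.card S := by
  rw [← Finset.powerset_univ, Finset.sum_powerset, Finset.card_univ, Fintype.card_fin]
  refine Finset.sum_congr rfl fun p _ => ?_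
  rw [Finset.mul_sum]
  refine Finset.sum_congr rfl fun S hS => ?_
  rw [(Finset.mem_powersetCard.1 hS).2]

lemma sum_pow_mul_sum_coloredFun_eq_sum_pairs [MeasurableEq E]
    (hfg : ∀ (j₁ : Fin l ↪ Fin k₁) (j₂ : Fin l ↪ Fin k₂), LabelIntegrable P X (glue j₁ j₂ f g)) :
    ∑ p ∈ Finset.range (l + 1), (n : ℝ) ^ p *
        ∑ j₁ : Fin l ↪ Fin k₁, ∑ j₂ : Fin l ↪ Fin k₂, ∑ S ∈ Finset.powersetCard p Finset.univ,
          labelSum P X (coloredFun P k₁ k₂ l p j₁ j₂ S f g) =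
      ∑ j : (Fin l ↪ Fin k₁) × (Fin l ↪ Fin k₂),
        ∑ τ : (Fin k₁ → Option (Fin n)) × (Fin k₂ → Option (Fin n)) with
          PartialInjective τ.1 ∧ PartialInjective τ.2 ∧ Enumerates j.1 j.2 (SharesLabel τ.1 τ.2),
          labelTerm P X f τ.1 * labelTerm P X g τ.2 := by
  have hdiagram (j₁ : Fin l ↪ Fin k₁) (j₂ : Fin l ↪ Fin k₂) :=
    (sum_pow_mul_sum_powersetCard (n : ℝ) fun p S =>
      labelSum P X (coloredFun P k₁ k₂ l p j₁ j₂ S f g)).trans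
    (sum_coloredFun_eq_sum_pairs j₁ j₂ P (hfg j₁ j₂))
  simp only [Fintype.sum_prod_type, ← hdiagram]
  simp only [Finset.mul_sum (s := .univ)]
  rw [Finset.sum_comm]
  exact Finset.sum_congr rfl fun j₁ _ => Finset.sum_comm

end Average

section Coefficients

variable {k₁ k₂ l p : ℕ}

/-- The left-hand quotient is `|𝓑(l,p)|`; `avgColored` lists each colored diagram `l!` times. -/
lemma card_coloredDiagrams_mul_inv_card (hp : p ≤ l) (h₁ : l ≤ k₁) (h₂ : l ≤ k₂) :
    (k₁.factorial * k₂.factorial : ℝ) /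
        ((k₁ - l).factorial * (k₂ - l).factorial * (l - p).factorial * p.factorial) *
      ((Fintype.card (Fin l ↪ Fin k₁) * Fintype.card (Fin l ↪ Fin k₂) *
        (Finset.powersetCard p (Finset.univ : Finset (Fin l))).card : ℕ) : ℝ)⁻¹ =
      (l.factorial : ℝ)⁻¹ := by
  have hdesc {k : ℕ} (h : l ≤ k) : (k.factorial : ℝ) = (k - l).factorial * k.descFactorial l := by
    exact_mod_cast (Nat.factorial_mul_descFactorial h).symm
  have hdesc_ne {k : ℕ} (h : l ≤ k) : (k.descFactorial l : ℝ) ≠ 0 := by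
    exact_mod_cast (Nat.descFactorial_pos.2 h).ne'
  have hchoose : (l.factorial : ℝ) = l.choose p * p.factorial * (l - p).factorial := by
    exact_mod_cast (Nat.choose_mul_factorial_mul_factorial hp).symm
  have hchoose_ne : (l.choose p : ℝ) ≠ 0 := by exact_mod_cast (Nat.choose_pos hp).ne'
  have hne₁ := hdesc_ne h₁
  have hne₂ := hdesc_ne h₂
  simp only [Fintype.card_embedding_eq, Finset.card_powersetCard, Fintype.card_fin,
    Finset.card_univ, Nat.cast_mul]
  rw [hdesc h₁, hdesc h₂, hchoose]
  field_simp

lemma sqrt_div_pow_mul_inv_pow {x a : ℝ} (hx : 0 < x) (ha : 0 < a) (hp : p ≤ l) {K : ℕ}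
    (hK : l + p ≤ K) :
    √(x / a) ^ (l + p) * (√x)⁻¹ ^ (l - p) * (√a)⁻¹ ^ (K - l - p) = (√a)⁻¹ ^ K * x ^ p := by
  obtain ⟨m, rfl⟩ := Nat.exists_eq_add_of_le hp
  obtain ⟨K, rfl⟩ := Nat.exists_eq_add_of_le hK
  have hm : p + m - p = m := by omega
  have hK' : p + m + p + K - (p + m) - p = K := by omega
  have hsq : x ^ p = √x ^ (2 * p) := by rw [pow_mul, Real.sq_sqrt hx.le]
  have : √x ≠ 0 := (Real.sqrt_pos.2 hx).ne'
  have : √a ≠ 0 := (Real.sqrt_pos.2 ha).ne'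
  rw [hm, hK', hsq, Real.sqrt_div hx.le]
  simp only [inv_pow, div_pow]
  field_simp
  ring

lemma coefficient_mul {x a : ℝ} (hx : 0 < x) (ha : 0 < a) (hp : p ≤ l) (h₁ : l ≤ k₁)
    (h₂ : l ≤ k₂) (T : ℝ) :
    √(x / a) ^ (l + p) *
          ((k₁.factorial * k₂.factorial : ℝ) /
            ((k₁ - l).factorial * (k₂ - l).factorial * (l - p).factorial * p.factorial)) *
          ((√x)⁻¹ ^ (l - p)) *
        ((√a)⁻¹ ^ (k₁ + k₂ - l - p) *
          (((Fintype.card (Fin l ↪ Fin k₁) * Fintype.card (Fin l ↪ Fin k₂) *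
            (Finset.powersetCard p (Finset.univ : Finset (Fin l))).card : ℕ) : ℝ)⁻¹ * T)) =
      (√a)⁻¹ ^ (k₁ + k₂) * ((l.factorial : ℝ)⁻¹ * (x ^ p * T)) := by
  have hpow := sqrt_div_pow_mul_inv_pow hx ha hp (show l + p ≤ k₁ + k₂ by omega)
  rw [← card_coloredDiagrams_mul_inv_card hp h₁ h₂]
  linear_combination ((k₁.factorial * k₂.factorial : ℝ) /
    ((k₁ - l).factorial * (k₂ - l).factorial * (l - p).factorial * p.factorial) *
    ((Fintype.card (Fin l ↪ Fin k₁) * Fintype.card (Fin l ↪ Fin k₂) *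
      (Finset.powersetCard p (Finset.univ : Finset (Fin l))).card : ℕ) : ℝ)⁻¹ * T) * hpow

end Coefficients

section Pathwise

variable {E : Type*} [MeasurableSpace E] [Nonempty E] [MeasurableEq E] (P : Measure E)
  [IsProbabilityMeasure P] [NullSingletonClass P] {k₁ k₂ n : ℕ} {a : ℝ} {X : Fin n → E}
  {f : (Fin k₁ → E) → ℝ} {g : (Fin k₂ → E) → ℝ}

theorem empInt_mul_empInt (ha : 0 < a) (hn : 1 ≤ n) (hX : Function.Injective X)
    (hf : LabelIntegrable P X f) (hg : LabelIntegrable P X g)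
    (hfg : ∀ l (j₁ : Fin l ↪ Fin k₁) (j₂ : Fin l ↪ Fin k₂),
      LabelIntegrable P X (glue j₁ j₂ f g)) :
    empInt P n a X k₁ f * empInt P n a X k₂ g =
      ∑ l ∈ Finset.range (min k₁ k₂ + 1), ∑ p ∈ Finset.range (l + 1),
        √((n : ℝ) / a) ^ (l + p) *
          ((k₁.factorial * k₂.factorial : ℝ) /
            ((k₁ - l).factorial * (k₂ - l).factorial * (l - p).factorial * p.factorial)) *
          ((√n)⁻¹ ^ (l - p)) *
          empInt P n a X (k₁ + k₂ - l - p) (avgColored P k₁ k₂ l p f g) := by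
  have hprod := labelSum_mul_labelSum P X f g
  simp only [Fintype.card_fin] at hprod
  rw [empInt_eq_labelSum P a hX hf, empInt_eq_labelSum P a hX hg, mul_mul_mul_comm, ← pow_add,
    hprod, Finset.mul_sum]
  refine Finset.sum_congr rfl fun l hl => ?_
  obtain ⟨h₁, h₂⟩ := le_min_iff.1 (Finset.mem_range_succ_iff.1 hl)
  rw [← sum_pow_mul_sum_coloredFun_eq_sum_pairs P (hfg l), Finset.mul_sum, Finset.mul_sum]
  refine Finset.sum_congr rfl fun p hp => ?_
  have hpl : p ≤ l := Finset.mem_range_succ_iff.1 hp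
  rw [empInt_eq_labelSum P a hX (labelIntegrable_avgColored P (hfg l) p),
    labelSum_avgColored P (hfg l), coefficient_mul (Nat.cast_pos.2 hn) ha hpl h₁ h₂]

end Pathwise

section Assumption

variable {E : Type*} [MeasurableSpace E] {μ : Measure E} {a : ℕ → ℝ} {P : ℕ → Measure E} {n : ℕ}

lemma le_smul_of_assumption21 (h : Assumption21 μ a P) (hn : 1 ≤ n) :
    P n ≤ (a n / n).toNNReal • μ := by
  obtain ⟨-, hpos, -, -, hmono, hlim⟩ := h
  refine Measure.le_iff.2 fun B hB => ?_
  have hmonotone : MonotoneOn (fun m : ℕ => ENNReal.ofReal (m / a m) * P m B) (Set.Ici n) :=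
    monotoneOn_nat_Ici_of_le_succ fun m hm => by
      simpa only [Nat.cast_succ] using hmono B hB m (hn.trans hm)
  have hle : ENNReal.ofReal (n / a n) * P n B ≤ μ B := by
    refine ge_of_tendsto (hlim B hB) ?_
    filter_upwards [eventually_ge_atTop n] with m hm
    exact hmonotone Set.self_mem_Ici hm hm
  have ha := hpos n hn
  have hn' : (0 : ℝ) < n := by exact_mod_cast hn
  calc P n B = ENNReal.ofReal (a n / n) * (ENNReal.ofReal (n / a n) * P n B) := by
        rw [← mul_assoc, ← ENNReal.ofReal_mul (by positivity), div_mul_div_cancel₀ hn'.ne',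
          div_self ha.ne', ENNReal.ofReal_one, one_mul]
    _ ≤ ENNReal.ofReal (a n / n) * μ B := by gcongr

lemma nullSingletonClass_of_le_smul {μ ν : Measure E} [NullSingletonClass ν] {c : ℝ≥0}
    (h : μ ≤ c • ν) : NullSingletonClass μ :=
  ⟨fun x => by simpa using h {x}⟩

lemma memLp_pi_of_le_smul {α F : Type*} [Fintype α] [NormedAddCommGroup F] {μ ν : Measure E}
    [SigmaFinite μ] [SigmaFinite ν] {c : ℝ≥0} (h : μ ≤ c • ν) {p : ℝ≥0∞} {f : (α → E) → F}
    (hf : MemLp f p (Measure.pi fun _ => ν)) : MemLp f p (Measure.pi fun _ => μ) :=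
  hf.of_measure_le_smul ENNReal.coe_ne_top (pi_le_smul_pi h)

end Assumption

section AlmostSure

variable {E κ₁ κ₂ J : Type*} [MeasurableSpace E] (P : Measure E) [IsProbabilityMeasure P]
  [Fintype J] [Fintype κ₁] [Fintype κ₂] [DecidableEq κ₂]

lemma integrable_glue (j₁ : J ↪ κ₁) (j₂ : J ↪ κ₂) {p q : ℝ≥0∞} [p.HolderConjugate q]
    {f : (κ₁ → E) → ℝ} {g : (κ₂ → E) → ℝ} (hf : MemLp f p (Measure.pi fun _ => P))
    (hg : MemLp g q (Measure.pi fun _ => P)) :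
    Integrable (glue j₁ j₂ f g) (Measure.pi fun _ => P) :=
  (hf.comp_measurePreserving
    (measurePreserving_comp_of_injective (fun _ => P) Sum.inl_injective)).integrable_mul
  (hg.comp_measurePreserving
    (measurePreserving_comp_of_injective (fun _ => P) secondRow_injective))

end AlmostSure

end EmpiricalDiagram

open EmpiricalDiagram in
theorem diagram_formula_general {E Ω : Type*} [MeasurableSpace E] [Nonempty E] [MeasurableEq E]
    [MeasurableSpace Ω] (P : Measure E) [IsProbabilityMeasure P] [NullSingletonClass P]
    (Pr : Measure Ω) {k1 k2 n : ℕ} (hn : 1 ≤ n) {a : ℝ} (ha : 0 < a) (X : Fin n → Ω → E)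
    (hXlaw : ∀ j, HasLaw (X j) P Pr) (hXindep : iIndepFun X Pr)
    {f : (Fin k1 → E) → ℝ} {g : (Fin k2 → E) → ℝ}
    (hf : MemLp f 2 (Measure.pi fun _ : Fin k1 => P))
    (hg : MemLp g 2 (Measure.pi fun _ : Fin k2 => P)) :
    ∀ᵐ ω ∂Pr,
      empInt P n a (fun j => X j ω) k1 f * empInt P n a (fun j => X j ω) k2 g =
        ∑ l ∈ Finset.range (min k1 k2 + 1), ∑ p ∈ Finset.range (l + 1),
          √((n : ℝ) / a) ^ (l + p) *
            ((k1.factorial * k2.factorial : ℝ) /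
              ((k1 - l).factorial * (k2 - l).factorial * (l - p).factorial * p.factorial)) *
            ((√n)⁻¹ ^ (l - p)) *
            empInt P n a (fun j => X j ω) (k1 + k2 - l - p) (avgColored P k1 k2 l p f g) := by
  have hsample : HasLaw (fun ω j => X j ω) (Measure.pi fun _ => P) Pr := hXindep.hasLaw_pi hXlaw
  have hinj : ∀ᵐ x ∂Measure.pi fun _ : Fin n => P, Function.Injective x :=
    ae_injective_pi fun _ _ _ => .of_forall fun x => measure_singleton x
  have hglue : ∀ᵐ x ∂Measure.pi fun _ : Fin n => P, ∀ l (j₁ : Fin l ↪ Fin k1)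
      (j₂ : Fin l ↪ Fin k2), LabelIntegrable P x (glue j₁ j₂ f g) := by
    simp only [ae_all_iff]
    exact fun l j₁ j₂ => ae_labelIntegrable P (integrable_glue P j₁ j₂ hf hg)
  have ae_sample {p : (Fin n → E) → Prop} (hp : ∀ᵐ x ∂Measure.pi fun _ => P, p x) :
      ∀ᵐ ω ∂Pr, p fun j => X j ω :=
    ae_of_ae_map hsample.aemeasurable (hsample.map_eq ▸ hp)
  filter_upwards [ae_sample hinj, ae_sample (ae_labelIntegrable P (hf.integrable one_le_two)),
    ae_sample (ae_labelIntegrable P (hg.integrable one_le_two)), ae_sample hglue]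
    with ω hX hfX hgX hfgX
  exact empInt_mul_empInt P ha hn hX hfX hgX hfgX

/-- The diagram formula: under Assumption 2.1, for `k1, k2 ≥ 1`,
`f ∈ L²(μ^{k1})`, `g ∈ L²(μ^{k2})` and `n ≥ 1`, almost surely
`I_{k1}^{(n)}(f) I_{k2}^{(n)}(g) = Σ_{l=0}^{min(k1,k2)} Σ_{p=0}^{l} (n/a_n)^{(l+p)/2}
|𝓑(l,p)| n^{-(l-p)/2} I_{k1+k2-l-p}^{(n)}((f ⊗ g)̄_{𝓑(l,p)})`. -/
theorem diagram_formula
    {E Ω : Type*} [MeasurableSpace E] [Nonempty E] [MeasurableSpace Ω]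
    (μ : Measure E) [SigmaFinite μ] [NullSingletonClass μ]
    (a : ℕ → ℝ) (P : ℕ → Measure E) [∀ n, IsProbabilityMeasure (P n)]
    (h21 : Assumption21 μ a P)
    (Pr : Measure Ω) [IsProbabilityMeasure Pr]
    (X : (n : ℕ) → Fin n → Ω → E)
    (hXmeas : ∀ n j, Measurable (X n j))
    (hXlaw : ∀ n : ℕ, 1 ≤ n → ∀ j, Measure.map (X n j) Pr = P n)
    (hXindep : ∀ n : ℕ, iIndepFun (m := fun _ : Fin n => ‹MeasurableSpace E›) (X n) Pr)
    (hdiag : MeasurableSet {p : E × E | p.1 = p.2})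
    (k1 k2 : ℕ) (hk1 : 1 ≤ k1) (hk2 : 1 ≤ k2)
    (f : (Fin k1 → E) → ℝ) (g : (Fin k2 → E) → ℝ)
    (hf : MemLp f 2 (Measure.pi fun _ : Fin k1 => μ))
    (hg : MemLp g 2 (Measure.pi fun _ : Fin k2 => μ))
    (n : ℕ) (hn : 1 ≤ n) :
    ∀ᵐ ω ∂Pr,
      empInt (P n) n (a n) (fun j => X n j ω) k1 f *
          empInt (P n) n (a n) (fun j => X n j ω) k2 g =
        ∑ l ∈ Finset.range (min k1 k2 + 1), ∑ p ∈ Finset.range (l + 1),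
          Real.sqrt ((n : ℝ) / a n) ^ (l + p) *
            ((k1.factorial * k2.factorial : ℝ) /
              ((k1 - l).factorial * (k2 - l).factorial * (l - p).factorial * p.factorial)) *
            ((Real.sqrt n)⁻¹ ^ (l - p)) *
            empInt (P n) n (a n) (fun j => X n j ω) (k1 + k2 - l - p)
              (avgColored (P n) k1 k2 l p f g) := by
  have : MeasurableEq E := ⟨hdiag⟩
  have hle := EmpiricalDiagram.le_smul_of_assumption21 h21 hn
  have := EmpiricalDiagram.nullSingletonClass_of_le_smul hle
  exact diagram_formula_general (P n) Pr hn (h21.2.1 n hn) (X n)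
    (fun j => ⟨(hXmeas n j).aemeasurable, hXlaw n hn j⟩) (hXindep n)
    (EmpiricalDiagram.memLp_pi_of_le_smul hle hf)
    (EmpiricalDiagram.memLp_pi_of_le_smul hle hg)
end

section
/- Assume the Example setup (so Assumption 2.1 holds with a_n = n/μ(E_n) and P_n = μ(· ∩ E_n)/μ(E_n)), let h = (h^{(k)})_{k≥0} ∈ H, and suppose there exists n_0 ≥ 1 such that h^{(k)} vanishes outside E_{n_0}^k for every k ≥ 1. Define γ_n(k_1,k_2) := 𝔼[I_{k_1}^{(n)}(h^{(k_1)}) · I_{k_2}^{(n)}(h^{(k_2)})]. Then there exists a constant C > 0 such that for every integer K ≥ 2 and every n ≥ K, sup_{1 ≤ k_1 < k_2 ≤ K} |γ_n(k_1,k_2)| ≤ C^K · K^{2K} · (a_n/n)^{1/2}. -/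
open MeasureTheory ProbabilityTheory Filter Topology
open scoped ENNReal NNReal

/-!
Expanding `(∑ j, (δ_{X_j} - P))^{⊗ k₁} ⊗ (∑ j, (δ_{X_j} - P))^{⊗ k₂}` over index maps
`θ : Fin k₁ ⊕ Fin k₂ → Fin n` writes `γ_n(k₁, k₂)` as a sum of expectations of integrals against
`⨂ i, (δ_{X_{θ i}} - P)`. If `θ` takes some value exactly once, the corresponding factor is centered
and independent of all others, so the term vanishes. The remaining maps take at most
`(k₁ + k₂) / 2` values, so there are at most `√n ^ (k₁ + k₂) * K ^ (2 * K)` of them, and the factor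
`√n ^ (k₁ + k₂)` is absorbed by the normalization `a ^ (-(k₁ + k₂) / 2)` and by the passage from the
`L²` norms under `P = μ[|E_n]` to those under `μ`. In a surviving term the kernels live off the
diagonal; as `k₁ < k₂`, some variable of the second kernel is not shared with the first, and since
it is confined to `E_{n₀}`, the Cauchy–Schwarz inequality gains the factor
`P(E_{n₀})^{1/2} ≤ (μ(E_{n₀}) a_n / n)^{1/2}`.
-/

section ProductMeasure

variable {E ι κ : Type*} [MeasurableSpace E]

lemma measurableSet_setOf_injective [Countable ι]
    (hdiag : MeasurableSet {p : E × E | p.1 = p.2}) :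
    MeasurableSet {u : ι → E | Function.Injective u} := by
  have hinter : {u : ι → E | Function.Injective u} =
      ⋂ i, ⋂ j, ⋂ (_ : i ≠ j), {u : ι → E | u i = u j}ᶜ := by
    ext u
    simp only [Set.mem_ofPred_eq, Set.mem_iInter, Set.mem_compl_iff, Function.Injective, ne_eq]
    exact forall₂_congr fun i j => not_imp_not.symm
  rw [hinter]
  refine .iInter fun i => .iInter fun j => .iInter fun _ => ?_
  have hpair : Measurable fun u : ι → E => (u i, u j) := by fun_prop
  exact (hpair hdiag).compl

lemma piCongrLeft_symm_eq_comp (σ : Equiv.Perm ι) :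
    ⇑(MeasurableEquiv.piCongrLeft (fun _ : ι => E) σ.symm) = fun u => u ∘ σ := by
  funext u i
  simpa [MeasurableEquiv.coe_piCongrLeft] using
    Equiv.piCongrLeft_apply_apply (P := fun _ : ι => E) (e := σ.symm) u (σ i)

lemma measurableEmbedding_comp_perm (σ : Equiv.Perm ι) :
    MeasurableEmbedding (fun u : ι → E => u ∘ σ) :=
  piCongrLeft_symm_eq_comp (E := E) σ ▸ MeasurableEquiv.measurableEmbedding _

variable [Fintype ι] [Fintype κ]

lemma measurePreserving_comp_of_injective (P : Measure E) [IsProbabilityMeasure P] {τ : ι → κ}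
    (hτ : Function.Injective τ) :
    MeasurePreserving (fun w : κ → E => w ∘ τ) (.pi fun _ => P) (.pi fun _ => P) := by
  have hindep : iIndepFun (fun i (w : κ → E) => w (τ i)) (.pi fun _ => P) :=
    (iIndepFun_pi (X := fun _ => id) fun _ => aemeasurable_id).precomp hτ
  rw [iIndepFun_iff_map_fun_eq_pi_map fun i => (measurable_pi_apply _).aemeasurable] at hindep
  simp only [(measurePreserving_eval (fun _ : κ => P) _).map_eq] at hindep
  exact ⟨by fun_prop, hindep⟩

lemma measurePreserving_comp_perm (ν : ι → Measure E) [∀ i, SigmaFinite (ν i)]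
    (σ : Equiv.Perm ι) :
    MeasurePreserving (fun u : ι → E => u ∘ σ) (.pi ν) (.pi fun i => ν (σ i)) := by
  rw [← piCongrLeft_symm_eq_comp]
  simpa using measurePreserving_piCongrLeft (fun i => ν (σ i)) σ.symm

lemma measurePreserving_sumElim (ν : Measure E) [SigmaFinite ν] :
    MeasurePreserving (fun p : (ι → E) × (κ → E) => Sum.elim p.1 p.2)
      ((Measure.pi fun _ => ν).prod (.pi fun _ => ν)) (.pi fun _ => ν) := by
  convert measurePreserving_sumPiEquivProdPi_symm (fun _ : ι ⊕ κ => ν) using 1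
  ext p i
  cases i <;> rfl

lemma integral_sumElim (ν : Measure E) [SigmaFinite ν] (F : (ι ⊕ κ → E) → ℝ) :
    ∫ p, F (Sum.elim p.1 p.2) ∂((Measure.pi fun _ : ι => ν).prod (.pi fun _ : κ => ν)) =
      ∫ w, F w ∂(Measure.pi fun _ => ν) := by
  rw [← (measurePreserving_sumPiEquivProdPi_symm fun _ : ι ⊕ κ => ν).integral_comp']
  congr!

lemma measurePreserving_comp_prodMk_apply (P : Measure E) [IsProbabilityMeasure P] {τ : ι → κ}
    (hτ : Function.Injective τ) {c : κ} (hc : c ∉ Set.range τ) :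
    MeasurePreserving (fun w : κ → E => (w ∘ τ, w c)) (.pi fun _ => P)
      ((Measure.pi fun _ => P).prod P) := by
  have hinj : Function.Injective (Sum.elim τ fun _ : Unit => c) :=
    hτ.sumElim (Function.injective_of_subsingleton _) fun i _ h => hc ⟨i, h⟩
  exact ((MeasurePreserving.id _).prod (measurePreserving_eval (fun _ : Unit => P) ())).comp
    ((measurePreserving_sumPiEquivProdPi fun _ : ι ⊕ Unit => P).comp
      (measurePreserving_comp_of_injective P hinj))

lemma pi_finsetSum_eq_sum_pi [DecidableEq ι] (ρ : ι → κ → Measure E)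
    [∀ i j, IsFiniteMeasure (ρ i j)] :
    Measure.pi (fun i => ∑ j, ρ i j) = ∑ φ : ι → κ, Measure.pi fun i => ρ i (φ i) := by
  refine Measure.pi_eq fun s _ => ?_
  simp only [Measure.coe_finsetSum, Finset.sum_apply, Measure.pi_pi, Finset.prod_univ_sum,
    Fintype.piFinset_univ]

lemma pi_cond_eq_smul_restrict (μ : Measure E) [SigmaFinite μ] {A : Set E} (hA : μ A ≠ 0)
    (hA' : μ A ≠ ∞) :
    (Measure.pi fun _ : ι => μ[|A]) =
      (μ A)⁻¹ ^ Fintype.card ι • (Measure.pi fun _ => μ).restrict (Set.univ.pi fun _ => A) := by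
  have := cond_isProbabilityMeasure_of_finite hA hA'
  rw [Measure.restrict_pi_pi]
  refine Measure.pi_eq fun s _ => ?_
  simp [ProbabilityTheory.cond, Finset.prod_mul_distrib]

end ProductMeasure

section Sections

variable {α β γ : Type*} [MeasurableSpace α] [MeasurableSpace β] [MeasurableSpace γ]
  {μ : Measure α} {ν : Measure β} {ρ : Measure γ} [SFinite ν] {Ψ : α × β → γ}

lemma ae_ae_map_section_of_ae (hΨ : MeasurePreserving Ψ (μ.prod ν) ρ) {p : γ → Prop}
    (hp : ∀ᵐ c ∂ρ, p c) : ∀ᵐ x ∂μ, ∀ᵐ c ∂ν.map (fun y => Ψ (x, y)), p c := by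
  obtain ⟨N, hpN, hN, hN0⟩ := exists_measurable_superset_of_null hp
  have hnotMem : ∀ᵐ q ∂μ.prod ν, Ψ q ∉ N :=
    hΨ.quasiMeasurePreserving.ae (measure_eq_zero_iff_ae_notMem.1 hN0)
  filter_upwards [Measure.ae_ae_of_ae_prod hnotMem] with x hx
  have hmap : ∀ᵐ c ∂ν.map (fun y => Ψ (x, y)), c ∉ N :=
    (ae_map_iff (hΨ.measurable.comp measurable_prodMk_left).aemeasurable hN.compl).2 hx
  filter_upwards [hmap] with c hc
  exact not_not.1 fun h => hc (hpN h)

lemma ae_integrable_map_section [SFinite μ] (hΨ : MeasurePreserving Ψ (μ.prod ν) ρ) {f : γ → ℝ}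
    (hf : Integrable f ρ) : ∀ᵐ x ∂μ, Integrable f (ν.map fun y => Ψ (x, y)) := by
  have hsection : ∀ᵐ x ∂μ, Integrable (fun y => f (Ψ (x, y))) ν :=
    (hΨ.integrable_comp_of_integrable hf).prod_right_ae
  filter_upwards [hsection, ae_ae_map_section_of_ae hΨ hf.1.ae_eq_mk] with x hx hmk
  exact (integrable_map_measure ⟨_, hf.1.stronglyMeasurable_mk, hmk⟩
    (hΨ.measurable.comp measurable_prodMk_left).aemeasurable).2 hx

end Sections

section LpNorm

variable {α β : Type*} [MeasurableSpace α] [MeasurableSpace β] {ν : Measure α} {ρ : Measure β}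

lemma eLpNorm_comp_fst_prod [SFinite ρ] {p : ℝ≥0∞} (hp : p ≠ ∞) {f : α → ℝ}
    (hf : AEStronglyMeasurable f ν) :
    eLpNorm (fun q => f q.1) p (ν.prod ρ) = ρ Set.univ ^ (1 / p).toReal * eLpNorm f p ν := by
  have hfst : (ν.prod ρ).map Prod.fst = ρ Set.univ • ν := Measure.map_fst_prod
  have hf' : AEStronglyMeasurable f ((ν.prod ρ).map Prod.fst) := hfst ▸ hf.smul_measure _
  rw [← smul_eq_mul, ← eLpNorm_smul_measure_of_ne_top hp, ← hfst,
    eLpNorm_map_measure hf' measurable_fst.aemeasurable]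
  rfl

lemma enorm_integral_mul_le_eLpNorm_mul_eLpNorm {f g : α → ℝ} (hf : AEStronglyMeasurable f ν)
    (hg : AEStronglyMeasurable g ν) :
    ‖∫ x, f x * g x ∂ν‖ₑ ≤ eLpNorm f 2 ν * eLpNorm g 2 ν :=
  calc ‖∫ x, f x * g x ∂ν‖ₑ ≤ eLpNorm (f • g) 1 ν := by
        rw [eLpNorm_one_eq_lintegral_enorm]
        exact enorm_integral_le_lintegral_enorm _
    _ ≤ _ := eLpNorm_smul_le_mul_eLpNorm hg hf

end LpNorm

section Counting

variable {ι ι' κ : Type*} [Fintype ι]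

lemma exists_notMem_range_of_card_lt [Fintype ι'] {τ : ι → κ} {τ' : ι' → κ}
    (hτ' : Function.Injective τ') (hcard : Fintype.card ι < Fintype.card ι') :
    ∃ i, τ' i ∉ Set.range τ := by
  by_contra! hrange
  choose s hs using hrange
  have hinj : Function.Injective s :=
    fun i j hij => hτ' (by rw [← hs i, ← hs j, hij])
  exact hcard.not_ge (Fintype.card_le_of_injective s hinj)

lemma two_mul_card_image_le [DecidableEq κ] {φ : ι → κ}
    (hφ : ∀ i, ∃ j ≠ i, φ j = φ i) :
    2 * (Finset.univ.image φ).card ≤ Fintype.card ι := by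
  refine Finset.mul_card_image_le_card Finset.univ 2 fun b hb => ?_
  obtain ⟨i, -, rfl⟩ := Finset.mem_image.1 hb
  obtain ⟨j, hne, heq⟩ := hφ i
  exact Finset.one_lt_card.2 ⟨j, by simp [heq], i, by simp, hne⟩

lemma exists_comp_eq_of_card_image_le [Nonempty κ] [DecidableEq κ] {φ : ι → κ} {s : ℕ}
    (hs : (Finset.univ.image φ).card ≤ s) : ∃ (e : Fin s → κ) (c : ι → Fin s), e ∘ c = φ := by
  obtain ⟨enum⟩ : Nonempty (Finset.univ.image φ ↪ Fin s) :=
    Function.Embedding.nonempty_of_card_le (by simpa using hs)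
  refine ⟨Function.extend enum Subtype.val fun _ => Classical.arbitrary κ,
    fun i => enum ⟨φ i, Finset.mem_image_of_mem _ (Finset.mem_univ _)⟩, ?_⟩
  ext i
  simp [enum.injective.extend_apply]

variable [Fintype κ] [DecidableEq ι] [DecidableEq κ]

variable (ι κ) in
/-- The index maps that take each of their values at least twice: the only ones whose terms
survive centering. -/
def repeatingMaps : Finset (ι → κ) :=
  Finset.univ.filter fun φ => ∀ i, ∃ j ≠ i, φ j = φ i

lemma notMem_repeatingMaps {φ : ι → κ} :
    φ ∉ repeatingMaps ι κ ↔ ∃ i, ∀ j ≠ i, φ j ≠ φ i := by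
  simp [repeatingMaps]

lemma card_repeatingMaps_le [Nonempty κ] :
    (repeatingMaps ι κ).card ≤
      Fintype.card κ ^ (Fintype.card ι / 2) * (Fintype.card ι / 2) ^ Fintype.card ι := by
  have hsub : repeatingMaps ι κ ⊆ Finset.univ.image
      fun q : (Fin (Fintype.card ι / 2) → κ) × (ι → Fin (Fintype.card ι / 2)) => q.1 ∘ q.2 := by
    intro φ hφ
    have htwo := two_mul_card_image_le (Finset.mem_filter.1 hφ).2
    obtain ⟨e, c, hec⟩ :=
      exists_comp_eq_of_card_image_le (φ := φ) (s := Fintype.card ι / 2) (by omega)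
    exact Finset.mem_image.2 ⟨(e, c), Finset.mem_univ _, hec⟩
  calc (repeatingMaps ι κ).card ≤ _ := (Finset.card_le_card hsub).trans Finset.card_image_le
    _ = _ := by simp

lemma card_repeatingMaps_le_sqrt_pow_mul [Nonempty κ] {K : ℕ} (hK : 1 ≤ K)
    (hcard : Fintype.card ι ≤ 2 * K) :
    ((repeatingMaps ι κ).card : ℝ) ≤
      √(Fintype.card κ) ^ Fintype.card ι * (K : ℝ) ^ (2 * K) := by
  have hκ : (1 : ℝ) ≤ √(Fintype.card κ) :=
    Real.one_le_sqrt.2 (by exact_mod_cast Fintype.card_pos (α := κ))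
  have hhalf : ((Fintype.card ι / 2 : ℕ) : ℝ) ≤ K := by exact_mod_cast (by omega)
  calc ((repeatingMaps ι κ).card : ℝ)
      ≤ (Fintype.card κ : ℝ) ^ (Fintype.card ι / 2) *
          ((Fintype.card ι / 2 : ℕ) : ℝ) ^ Fintype.card ι := by
        exact_mod_cast card_repeatingMaps_le (ι := ι) (κ := κ)
    _ = √(Fintype.card κ) ^ (2 * (Fintype.card ι / 2)) *
          ((Fintype.card ι / 2 : ℕ) : ℝ) ^ Fintype.card ι := by
        rw [pow_mul, Real.sq_sqrt (Nat.cast_nonneg _)]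
    _ ≤ √(Fintype.card κ) ^ Fintype.card ι * (K : ℝ) ^ Fintype.card ι := by
        gcongr
        exact Nat.mul_div_le _ _
    _ ≤ √(Fintype.card κ) ^ Fintype.card ι * (K : ℝ) ^ (2 * K) := by
        gcongr
        exact_mod_cast hK

end Counting

section Kernel

variable {E ι ι' κ : Type*}

/-- The kernel `f` cut off to the off-diagonal set, so that integrals of `f` over that set become
unrestricted integrals. -/
noncomputable def offDiag (f : (ι → E) → ℝ) : (ι → E) → ℝ :=
  {u | Function.Injective u}.indicator f

/-- The tensor product `f ⊗ g` of two kernels, with variables indexed by `ι ⊕ ι'`. -/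
def tensorKernel (f : (ι → E) → ℝ) (g : (ι' → E) → ℝ) (u : ι ⊕ ι' → E) : ℝ :=
  f (u ∘ Sum.inl) * g (u ∘ Sum.inr)

lemma offDiag_comp_eq_zero {τ : ι → κ} (hτ : ¬ Function.Injective τ) (f : (ι → E) → ℝ)
    (w : κ → E) : offDiag f (w ∘ τ) = 0 :=
  Set.indicator_of_notMem (fun h => hτ h.of_comp) _

lemma offDiag_eq_zero {f : (ι → E) → ℝ} {u : ι → E} (hu : f u = 0) : offDiag f u = 0 := by
  classical rw [offDiag, Set.indicator_apply, hu, ite_self]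

/-- The variable substituted for `i` in the expansion of `⨂ i, (δ_{x (φ i)} - P)`: the sample point
`φ i` if `ε i` selects the Dirac mass, and a private variable of law `P` if it selects `P`. -/
def sampleSlot (φ : ι → κ) (ε : ι → Bool) (i : ι) : κ ⊕ ι :=
  if ε i then Sum.inl (φ i) else Sum.inr i

/-- The sign of the term selected by `ε` in the expansion of a product of differences. -/
noncomputable def partSign [Fintype ι] (ε : ι → Bool) : ℝ := ∏ i, if ε i then 1 else -1

lemma abs_partSign [Fintype ι] (ε : ι → Bool) : |partSign ε| = 1 := by
  simp [partSign, Finset.abs_prod, apply_ite]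

lemma partSign_sumElim [Fintype ι] [Fintype ι'] (ε : ι → Bool) (ε' : ι' → Bool) :
    partSign (Sum.elim ε ε') = partSign ε * partSign ε' :=
  Fintype.prod_sum_type _

lemma partSign_update_not [Fintype ι] [DecidableEq ι] (ε : ι → Bool) (i : ι) :
    partSign (Function.update ε i (!ε i)) = -partSign ε := by
  have hrest : ∏ j ∈ Finset.univ.erase i, (if Function.update ε i (!ε i) j then (1 : ℝ) else -1) =
      ∏ j ∈ Finset.univ.erase i, if ε j then 1 else -1 :=
    Finset.prod_congr rfl fun j hj => by rw [Function.update_of_ne (Finset.ne_of_mem_erase hj)]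
  simp only [partSign]
  rw [← Finset.mul_prod_erase _ _ (Finset.mem_univ i), hrest,
    ← Finset.mul_prod_erase _ (fun j => if ε j then (1 : ℝ) else -1) (Finset.mem_univ i)]
  cases ε i <;> simp

lemma sampleSlot_update_not [DecidableEq ι] [DecidableEq κ] {φ : ι → κ} {i : ι}
    (hi : ∀ j ≠ i, φ j ≠ φ i) (ε : ι → Bool) :
    sampleSlot φ (Function.update ε i (!ε i)) =
      Equiv.swap (Sum.inl (φ i)) (Sum.inr i) ∘ sampleSlot φ ε := by
  funext j
  rcases eq_or_ne j i with rfl | hj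
  · cases hε : ε j <;> simp [sampleSlot, hε]
  · cases hε : ε j <;>
      simp [sampleSlot, hε, hj, Equiv.swap_apply_of_ne_of_ne, hi j hj]

/-- The integral of the kernel `f` against the signed product measure `⨂ i, (δ_{x (φ i)} - P)`,
expanded multilinearly. -/
noncomputable def centeredInt [Fintype ι] [DecidableEq ι] [MeasurableSpace E] (P : Measure E)
    (f : (ι → E) → ℝ) (φ : ι → κ) (x : κ → E) : ℝ :=
  ∑ ε : ι → Bool, partSign ε *
    ∫ z, f (Sum.elim x z ∘ sampleSlot φ ε) ∂(Measure.pi fun _ : ι => P)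

end Kernel

section EmpInt

variable {E : Type*} [MeasurableSpace E] {P : Measure E} [IsProbabilityMeasure P] {n k : ℕ}

lemma mixMeasure_eq_sum_map (x : Fin n → E) (b : Bool) :
    mixMeasure P n x b = ∑ j, P.map fun y => if b then x j else y := by
  cases b
  · ext s
    simp [mixMeasure]
  · simp [mixMeasure]

instance isFiniteMeasure_mixMeasure (x : Fin n → E) (b : Bool) :
    IsFiniteMeasure (mixMeasure P n x b) := by
  rw [mixMeasure_eq_sum_map]
  infer_instance

lemma measurable_sumElim_comp_sampleSlot {ι κ : Type*} (φ : ι → κ) (ε : ι → Bool) :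
    Measurable fun p : (κ → E) × (ι → E) => Sum.elim p.1 p.2 ∘ sampleSlot φ ε := by
  refine measurable_pi_lambda _ fun i => ?_
  simp only [Function.comp_apply]
  cases sampleSlot φ ε i with
  | inl j => exact (measurable_pi_apply j).comp measurable_fst
  | inr j => exact (measurable_pi_apply j).comp measurable_snd

lemma pi_mixMeasure_eq_sum_map (x : Fin n → E) (ε : Fin k → Bool) :
    Measure.pi (fun i => mixMeasure P n x (ε i)) = ∑ φ : Fin k → Fin n,
      (Measure.pi fun _ => P).map fun z => Sum.elim x z ∘ sampleSlot φ ε := by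
  have hmeas (i : Fin k) (j : Fin n) : Measurable fun y : E => if ε i then x j else y :=
    .ite (.const _) measurable_const measurable_id
  have (i : Fin k) (j : Fin n) : IsProbabilityMeasure (P.map fun y => if ε i then x j else y) :=
    Measure.isProbabilityMeasure_map (hmeas i j).aemeasurable
  simp only [mixMeasure_eq_sum_map, pi_finsetSum_eq_sum_pi]
  refine Finset.sum_congr rfl fun φ _ => ?_
  rw [← Measure.pi_map_pi fun i => (hmeas i (φ i)).aemeasurable]
  congr 1
  ext z i
  by_cases hε : ε i <;> simp [sampleSlot, hε]

lemma ae_integrable_offDiag_map_sampleSlot {ι κ : Type*} [Fintype ι] [Fintype κ]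
    (hdiag : MeasurableSet {p : E × E | p.1 = p.2}) {f : (ι → E) → ℝ}
    (hf : Integrable f (.pi fun _ => P)) (φ : ι → κ) (ε : ι → Bool) :
    ∀ᵐ x ∂(Measure.pi fun _ : κ => P), Integrable (offDiag f)
      ((Measure.pi fun _ => P).map fun z => Sum.elim x z ∘ sampleSlot φ ε) := by
  have hset : MeasurableSet {u : ι → E | Function.Injective u} :=
    measurableSet_setOf_injective hdiag
  by_cases hinj : Function.Injective (sampleSlot φ ε)
  · exact ae_integrable_map_section
      ((measurePreserving_comp_of_injective P hinj).comp (measurePreserving_sumElim P))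
      (hf.indicator hset)
  · refine .of_forall fun x => (integrable_zero _ _ _).congr ?_
    have hnot : ∀ᵐ u ∂(Measure.pi fun _ => P).map (fun z => Sum.elim x z ∘ sampleSlot φ ε),
        u ∈ {u : ι → E | Function.Injective u}ᶜ :=
      (ae_map_iff ((measurable_sumElim_comp_sampleSlot φ ε).comp
        measurable_prodMk_left).aemeasurable hset.compl).2 <|
          .of_forall fun z h => hinj (Function.Injective.of_comp (f := Sum.elim x z) h)
    filter_upwards [hnot] with u hu
    exact (Set.indicator_of_notMem hu f).symm

lemma ae_integrableOn_pi_mixMeasure (hdiag : MeasurableSet {p : E × E | p.1 = p.2})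
    {f : (Fin k → E) → ℝ} (hf : Integrable f (.pi fun _ => P)) :
    ∀ᵐ x ∂(Measure.pi fun _ : Fin n => P), ∀ ε : Fin k → Bool,
      IntegrableOn f {u | Function.Injective u} (.pi fun i => mixMeasure P n x (ε i)) := by
  have hterm := ae_all_iff.2 fun ε => ae_all_iff.2 fun φ : Fin k → Fin n =>
    ae_integrable_offDiag_map_sampleSlot hdiag hf φ ε
  filter_upwards [hterm] with x hx ε
  rw [← integrable_indicator_iff (measurableSet_setOf_injective hdiag), pi_mixMeasure_eq_sum_map]
  exact integrable_finsetSum_measure.2 fun φ _ => hx ε φ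

lemma ae_empInt_eq_sum_centeredInt (hdiag : MeasurableSet {p : E × E | p.1 = p.2}) (a : ℝ)
    {f : (Fin k → E) → ℝ} (hf : Integrable f (.pi fun _ => P)) :
    ∀ᵐ x ∂(Measure.pi fun _ : Fin n => P), empInt P n a x k f =
      (Real.sqrt a)⁻¹ ^ k * ∑ φ : Fin k → Fin n, centeredInt P (offDiag f) φ x := by
  have hterm := ae_all_iff.2 fun ε => ae_all_iff.2 fun φ : Fin k → Fin n =>
    ae_integrable_offDiag_map_sampleSlot hdiag hf φ ε
  filter_upwards [hterm] with x hx
  simp only [empInt, centeredInt]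
  rw [Finset.sum_comm]
  congr! 2 with ε
  have hsign : (-1 : ℝ) ^ (Finset.univ.filter fun i => ε i = false).card = partSign ε := by
    simp [partSign, Finset.prod_ite]
  rw [← Finset.mul_sum, hsign, ← integral_indicator (measurableSet_setOf_injective hdiag),
    ← offDiag, pi_mixMeasure_eq_sum_map, integral_finsetSum_measure fun φ _ => hx ε φ]
  congr! 2 with φ
  exact integral_map ((measurable_sumElim_comp_sampleSlot φ ε).comp
    measurable_prodMk_left).aemeasurable (hx ε φ).1

lemma empInt_comp_perm (a : ℝ) (x : Fin n → E) (f : (Fin k → E) → ℝ) (σ : Equiv.Perm (Fin k)) :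
    empInt P n a x k (fun u => f (u ∘ σ)) = empInt P n a x k f := by
  unfold empInt
  congr 1
  refine Fintype.sum_equiv (σ.symm.arrowCongr (Equiv.refl Bool)) _ _ fun ε => ?_
  congr 1
  · congr 1
    exact Finset.card_equiv σ.symm fun i => by simp [Equiv.arrowCongr]
  · have hpre : (fun u : Fin k → E => u ∘ σ) ⁻¹' {u | Function.Injective u} =
        {u | Function.Injective u} :=
      Set.ext fun u => Function.Injective.of_comp_iff' u σ.bijective
    have hint := (measurePreserving_comp_perm (fun i => mixMeasure P n x (ε i)) σ)
      |>.setIntegral_preimage_emb (measurableEmbedding_comp_perm σ) f {u | Function.Injective u}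
    rw [hpre] at hint
    exact hint

lemma ae_empInt_symmetrize_eq (hdiag : MeasurableSet {p : E × E | p.1 = p.2}) (a : ℝ)
    {f : (Fin k → E) → ℝ} (hf : Integrable f (.pi fun _ => P)) :
    ∀ᵐ x ∂(Measure.pi fun _ : Fin n => P),
      empInt P n a x k (symmetrize k f) = empInt P n a x k f := by
  have hperm (σ : Equiv.Perm (Fin k)) : Integrable (fun u => f (u ∘ σ)) (.pi fun _ => P) :=
    (measurePreserving_comp_perm (fun _ => P) σ).integrable_comp_of_integrable hf
  filter_upwards [ae_all_iff.2 fun σ => ae_integrableOn_pi_mixMeasure hdiag (hperm σ)] with x hx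
  have hlinear : empInt P n a x k (symmetrize k f) =
      (k.factorial : ℝ)⁻¹ * ∑ σ : Equiv.Perm (Fin k), empInt P n a x k fun u => f (u ∘ σ) := by
    simp only [empInt, symmetrize, integral_const_mul]
    rw [← Finset.mul_sum, Finset.sum_comm, mul_left_comm, Finset.mul_sum (a := (k.factorial : ℝ)⁻¹)]
    congr! 2 with ε
    rw [← Finset.mul_sum, mul_left_comm, integral_finsetSum _ fun σ _ => hx σ ε]
  rw [hlinear]
  simp only [empInt_comp_perm, Finset.sum_const, Finset.card_univ, Fintype.card_perm,
    Fintype.card_fin, nsmul_eq_mul]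
  exact inv_mul_cancel_left₀ (by positivity) _

end EmpInt

section CenteredInt

variable {E ι ι' κ : Type*} [Fintype ι] [Fintype ι'] [MeasurableSpace E]
  {P : Measure E} [IsProbabilityMeasure P]

lemma centeredInt_mul_centeredInt [DecidableEq ι] [DecidableEq ι'] (f : (ι → E) → ℝ)
    (g : (ι' → E) → ℝ) (φ : ι → κ) (ψ : ι' → κ) (x : κ → E) :
    centeredInt P f φ x * centeredInt P g ψ x =
      centeredInt P (tensorKernel f g) (Sum.elim φ ψ) x := by
  simp only [centeredInt, Finset.sum_mul_sum]
  rw [← Fintype.sum_prod_type',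
    ← (Equiv.sumArrowEquivProdArrow ι ι' Bool).symm.sum_comp]
  refine Finset.sum_congr rfl fun ⟨ε, ε'⟩ _ => ?_
  rw [mul_mul_mul_comm, ← partSign_sumElim, ← integral_prod_mul, ← integral_sumElim]
  congr! 3
  refine congrArg₂ _ (congrArg f ?_) (congrArg g ?_)
  · funext i
    cases hε : ε i <;> simp [sampleSlot, hε]
  · funext i
    cases hε : ε' i <;> simp [sampleSlot, hε]

variable [Fintype κ]

lemma integrable_section_sampleSlot {f : (ι → E) → ℝ} {φ : ι → κ} {ε : ι → Bool}
    (hf : Integrable (fun w => f (w ∘ sampleSlot φ ε)) (.pi fun _ => P)) :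
    Integrable (fun p : (κ → E) × (ι → E) => f (Sum.elim p.1 p.2 ∘ sampleSlot φ ε))
      ((Measure.pi fun _ => P).prod (.pi fun _ => P)) :=
  (measurePreserving_sumElim P).integrable_comp_of_integrable hf

variable [DecidableEq ι]

lemma integrable_centeredInt {f : (ι → E) → ℝ} {φ : ι → κ}
    (hf : ∀ ε, Integrable (fun w => f (w ∘ sampleSlot φ ε)) (.pi fun _ => P)) :
    Integrable (centeredInt P f φ) (.pi fun _ => P) :=
  integrable_finsetSum _ fun ε _ =>
    (integrable_section_sampleSlot (hf ε)).integral_prod_left.const_mul _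

lemma integral_centeredInt {f : (ι → E) → ℝ} {φ : ι → κ}
    (hf : ∀ ε, Integrable (fun w => f (w ∘ sampleSlot φ ε)) (.pi fun _ => P)) :
    ∫ x, centeredInt P f φ x ∂(Measure.pi fun _ => P) =
      ∑ ε, partSign ε * ∫ w, f (w ∘ sampleSlot φ ε) ∂(Measure.pi fun _ => P) := by
  simp only [centeredInt]
  rw [integral_finsetSum _ fun ε _ =>
    (integrable_section_sampleSlot (hf ε)).integral_prod_left.const_mul _]
  refine Finset.sum_congr rfl fun ε _ => ?_
  rw [integral_const_mul, ← integral_prod _ (integrable_section_sampleSlot (hf ε)),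
    integral_sumElim P fun w => f (w ∘ sampleSlot φ ε)]

-- Flipping `ε i` swaps a sample point seen by no other variable with a fresh copy of it, so the
-- two terms cancel.
lemma sum_partSign_mul_integral_eq_zero (f : (ι → E) → ℝ) {φ : ι → κ} {i : ι}
    (hi : ∀ j ≠ i, φ j ≠ φ i) :
    ∑ ε, partSign ε * ∫ w, f (w ∘ sampleSlot φ ε) ∂(Measure.pi fun _ => P) = 0 := by
  classical
  have hflip (ε : ι → Bool) :
      ∫ w, f (w ∘ sampleSlot φ (Function.update ε i (!ε i))) ∂(Measure.pi fun _ => P) =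
        ∫ w, f (w ∘ sampleSlot φ ε) ∂(Measure.pi fun _ => P) := by
    rw [sampleSlot_update_not hi]
    exact (measurePreserving_comp_perm (fun _ : κ ⊕ ι => P) _).integral_comp
      (measurableEmbedding_comp_perm _) fun w => f (w ∘ sampleSlot φ ε)
  refine Finset.sum_involution (fun ε _ => Function.update ε i (!ε i)) (fun ε _ => ?_)
    (fun ε _ _ heq => ?_) (fun _ _ => Finset.mem_univ _) fun ε _ => by simp
  · rw [partSign_update_not, hflip]
    ring
  · simpa using congrFun heq i

end CenteredInt

section OffDiag

variable {E ι ι' κ : Type*} [Fintype ι] [Fintype ι'] [Fintype κ] [MeasurableSpace E]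
  {P : Measure E} [IsProbabilityMeasure P] {p : ℝ≥0∞}

lemma memLp_offDiag_comp (hdiag : MeasurableSet {p : E × E | p.1 = p.2}) {f : (ι → E) → ℝ}
    (hf : MemLp f p (.pi fun _ => P)) (τ : ι → κ) :
    MemLp (fun w => offDiag f (w ∘ τ)) p (.pi fun _ => P) := by
  by_cases hτ : Function.Injective τ
  · exact (hf.indicator (measurableSet_setOf_injective hdiag)).comp_measurePreserving
      (measurePreserving_comp_of_injective P hτ)
  · simp [offDiag_comp_eq_zero hτ]

lemma eLpNorm_offDiag_comp_le (hdiag : MeasurableSet {p : E × E | p.1 = p.2}) {f : (ι → E) → ℝ}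
    (hf : MemLp f p (.pi fun _ => P)) (τ : ι → κ) :
    eLpNorm (fun w => offDiag f (w ∘ τ)) p (.pi fun _ => P) ≤ eLpNorm f p (.pi fun _ => P) := by
  by_cases hτ : Function.Injective τ
  · exact (eLpNorm_comp_measurePreserving
      (hf.indicator (measurableSet_setOf_injective hdiag)).1
      (measurePreserving_comp_of_injective P hτ)).trans_le (eLpNorm_indicator_le f)
  · simp [offDiag_comp_eq_zero hτ]

lemma integrable_tensorKernel_offDiag_comp (hdiag : MeasurableSet {p : E × E | p.1 = p.2})
    {f : (ι → E) → ℝ} {g : (ι' → E) → ℝ} (hf : MemLp f 2 (.pi fun _ => P))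
    (hg : MemLp g 2 (.pi fun _ => P)) (τ : ι ⊕ ι' → κ) :
    Integrable (fun w => tensorKernel (offDiag f) (offDiag g) (w ∘ τ)) (.pi fun _ => P) :=
  (memLp_offDiag_comp hdiag hf (τ ∘ Sum.inl)).integrable_mul
    (memLp_offDiag_comp hdiag hg (τ ∘ Sum.inr))

lemma eLpNorm_indicator_offDiag_comp_le (hdiag : MeasurableSet {p : E × E | p.1 = p.2})
    (hp : p ≠ ∞) {f : (ι → E) → ℝ} (hf : MemLp f p (.pi fun _ => P)) {A : Set E}
    (hA : MeasurableSet A) {τ : ι → κ} {c : κ} (hc : c ∉ Set.range τ) :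
    eLpNorm (((· c) ⁻¹' A).indicator fun w => offDiag f (w ∘ τ)) p (.pi fun _ => P) ≤
      P A ^ (1 / p).toReal * eLpNorm f p (.pi fun _ => P) := by
  by_cases hτ : Function.Injective τ
  · have hf' : AEStronglyMeasurable (offDiag f) (.pi fun _ => P) :=
      (hf.indicator (measurableSet_setOf_injective hdiag)).1
    have hsnd : MeasurableSet (Prod.snd ⁻¹' A : Set ((ι → E) × E)) := measurable_snd hA
    have hmeas : AEStronglyMeasurable ((Prod.snd ⁻¹' A).indicator fun q => offDiag f q.1)
        ((Measure.pi fun _ => P).prod P) := hf'.comp_fst.indicator hsnd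
    have hprod : ((Measure.pi fun _ : ι => P).prod P).restrict (Prod.snd ⁻¹' A) =
        (Measure.pi fun _ => P).prod (P.restrict A) := by
      rw [← Set.univ_prod, ← Measure.prod_restrict, Measure.restrict_univ]
    calc eLpNorm (((· c) ⁻¹' A).indicator fun w => offDiag f (w ∘ τ)) p (.pi fun _ => P)
        = eLpNorm ((Prod.snd ⁻¹' A).indicator fun q : (ι → E) × E => offDiag f q.1) p
            ((Measure.pi fun _ => P).prod P) := by
          rw [← eLpNorm_comp_measurePreserving hmeas (measurePreserving_comp_prodMk_apply P hτ hc)]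
          rfl
      _ = P A ^ (1 / p).toReal * eLpNorm (offDiag f) p (.pi fun _ => P) := by
          rw [eLpNorm_indicator_eq_eLpNorm_restrict hsnd, hprod, eLpNorm_comp_fst_prod hp hf',
            Measure.restrict_apply_univ]
      _ ≤ P A ^ (1 / p).toReal * eLpNorm f p (.pi fun _ => P) := by
          gcongr
          exact eLpNorm_indicator_le f
  · simp [offDiag_comp_eq_zero hτ]

-- The kernel `g` has a variable that `f` does not see; integrating its support indicator together
-- with `f` gains the factor `P A ^ (1 / 2)` in the Cauchy–Schwarz inequality.
lemma enorm_integral_tensorKernel_offDiag_comp_le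
    (hdiag : MeasurableSet {p : E × E | p.1 = p.2}) (hcard : Fintype.card ι < Fintype.card ι')
    {f : (ι → E) → ℝ} {g : (ι' → E) → ℝ} (hf : MemLp f 2 (.pi fun _ => P))
    (hg : MemLp g 2 (.pi fun _ => P)) {A : Set E} (hA : MeasurableSet A)
    (hgA : ∀ u, (∃ i, u i ∉ A) → g u = 0) (τ : ι ⊕ ι' → κ) :
    ‖∫ w, tensorKernel (offDiag f) (offDiag g) (w ∘ τ) ∂(Measure.pi fun _ => P)‖ₑ ≤
      P A ^ (1 / 2 : ℝ) * eLpNorm f 2 (.pi fun _ => P) * eLpNorm g 2 (.pi fun _ => P) := by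
  by_cases hτ : Function.Injective (τ ∘ Sum.inr)
  · obtain ⟨i, hi⟩ := exists_notMem_range_of_card_lt (τ := τ ∘ Sum.inl) hτ hcard
    have hcut (w : κ → E) : tensorKernel (offDiag f) (offDiag g) (w ∘ τ) =
        ((· (τ (Sum.inr i))) ⁻¹' A).indicator (fun w => offDiag f (w ∘ τ ∘ Sum.inl)) w *
          offDiag g (w ∘ τ ∘ Sum.inr) := by
      by_cases hw : w (τ (Sum.inr i)) ∈ A
      · rw [Set.indicator_of_mem (show w ∈ (· (τ (Sum.inr i))) ⁻¹' A from hw)]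
        rfl
      · have hzero : offDiag g (w ∘ τ ∘ Sum.inr) = 0 := offDiag_eq_zero (hgA _ ⟨i, hw⟩)
        rw [hzero, mul_zero]
        exact mul_eq_zero_of_right _ hzero
    simp only [hcut]
    refine (enorm_integral_mul_le_eLpNorm_mul_eLpNorm
      ((memLp_offDiag_comp hdiag hf _).1.indicator (measurable_pi_apply _ hA))
      (memLp_offDiag_comp hdiag hg _).1).trans ?_
    gcongr
    · simpa using eLpNorm_indicator_offDiag_comp_le hdiag (by simp) hf hA hi
    · exact eLpNorm_offDiag_comp_le hdiag hg _
  · have hzero (w : κ → E) : offDiag g ((w ∘ τ) ∘ Sum.inr) = 0 := offDiag_comp_eq_zero hτ g w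
    simp [tensorKernel, hzero]

lemma abs_integral_tensorKernel_offDiag_comp_le
    (hdiag : MeasurableSet {p : E × E | p.1 = p.2}) (hcard : Fintype.card ι < Fintype.card ι')
    {f : (ι → E) → ℝ} {g : (ι' → E) → ℝ} (hf : MemLp f 2 (.pi fun _ => P))
    (hg : MemLp g 2 (.pi fun _ => P)) {A : Set E} (hA : MeasurableSet A)
    (hgA : ∀ u, (∃ i, u i ∉ A) → g u = 0) (τ : ι ⊕ ι' → κ) :
    |∫ w, tensorKernel (offDiag f) (offDiag g) (w ∘ τ) ∂(Measure.pi fun _ => P)| ≤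
      √(P.real A) * (eLpNorm f 2 (.pi fun _ => P)).toReal *
        (eLpNorm g 2 (.pi fun _ => P)).toReal := by
  have hbound := ENNReal.toReal_mono
    (by finiteness [hf.2.ne, hg.2.ne])
    (enorm_integral_tensorKernel_offDiag_comp_le hdiag hcard hf hg hA hgA τ)
  simpa [ENNReal.toReal_mul, ← ENNReal.toReal_rpow, Real.sqrt_eq_rpow, Measure.real] using hbound

end OffDiag

section MixedMoment

variable {E ι ι' κ : Type*} [Fintype ι] [Fintype ι'] [Fintype κ] [DecidableEq ι] [DecidableEq ι']
  [MeasurableSpace E] {P : Measure E} [IsProbabilityMeasure P]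

lemma sum_centeredInt_mul_sum_centeredInt (f : (ι → E) → ℝ) (g : (ι' → E) → ℝ) (x : κ → E) :
    (∑ φ, centeredInt P f φ x) * ∑ ψ, centeredInt P g ψ x =
      ∑ θ, centeredInt P (tensorKernel f g) θ x := by
  simp only [Finset.sum_mul_sum, centeredInt_mul_centeredInt]
  rw [← Fintype.sum_prod_type', ← (Equiv.sumArrowEquivProdArrow ι ι' κ).symm.sum_comp]
  rfl

variable {f : (ι → E) → ℝ} {g : (ι' → E) → ℝ} {A : Set E}

lemma abs_integral_centeredInt_tensorKernel_offDiag_le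
    (hdiag : MeasurableSet {p : E × E | p.1 = p.2}) (hcard : Fintype.card ι < Fintype.card ι')
    (hf : MemLp f 2 (.pi fun _ => P)) (hg : MemLp g 2 (.pi fun _ => P)) (hA : MeasurableSet A)
    (hgA : ∀ u, (∃ i, u i ∉ A) → g u = 0) (θ : ι ⊕ ι' → κ) :
    |∫ x, centeredInt P (tensorKernel (offDiag f) (offDiag g)) θ x ∂(Measure.pi fun _ => P)| ≤
      2 ^ Fintype.card (ι ⊕ ι') * (√(P.real A) * (eLpNorm f 2 (.pi fun _ => P)).toReal *
        (eLpNorm g 2 (.pi fun _ => P)).toReal) := by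
  rw [integral_centeredInt fun ε => integrable_tensorKernel_offDiag_comp hdiag hf hg _]
  calc _ ≤ ∑ ε : ι ⊕ ι' → Bool, |partSign ε * ∫ w, tensorKernel (offDiag f) (offDiag g)
          (w ∘ sampleSlot θ ε) ∂(Measure.pi fun _ => P)| := Finset.abs_sum_le_sum_abs _ _
    _ ≤ ∑ _ε : ι ⊕ ι' → Bool, √(P.real A) * (eLpNorm f 2 (.pi fun _ => P)).toReal *
          (eLpNorm g 2 (.pi fun _ => P)).toReal := by
        gcongr with ε
        rw [abs_mul, abs_partSign, one_mul]
        exact abs_integral_tensorKernel_offDiag_comp_le hdiag hcard hf hg hA hgA _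
    _ = _ := by simp

lemma integrable_sum_centeredInt_mul_sum_centeredInt
    (hdiag : MeasurableSet {p : E × E | p.1 = p.2}) (hf : MemLp f 2 (.pi fun _ => P))
    (hg : MemLp g 2 (.pi fun _ => P)) :
    Integrable (fun x : κ → E => (∑ φ, centeredInt P (offDiag f) φ x) *
      ∑ ψ, centeredInt P (offDiag g) ψ x) (.pi fun _ => P) := by
  simp only [sum_centeredInt_mul_sum_centeredInt]
  exact integrable_finsetSum _ fun θ _ => integrable_centeredInt fun ε =>
    integrable_tensorKernel_offDiag_comp hdiag hf hg _

lemma abs_integral_sum_centeredInt_mul_sum_centeredInt_le [DecidableEq κ]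
    (hdiag : MeasurableSet {p : E × E | p.1 = p.2}) (hcard : Fintype.card ι < Fintype.card ι')
    (hf : MemLp f 2 (.pi fun _ => P)) (hg : MemLp g 2 (.pi fun _ => P)) (hA : MeasurableSet A)
    (hgA : ∀ u, (∃ i, u i ∉ A) → g u = 0) :
    |∫ x, (∑ φ, centeredInt P (offDiag f) φ x) * ∑ ψ, centeredInt P (offDiag g) ψ x
        ∂(Measure.pi fun _ : κ => P)| ≤
      (repeatingMaps (ι ⊕ ι') κ).card * (2 ^ Fintype.card (ι ⊕ ι') *
        (√(P.real A) * (eLpNorm f 2 (.pi fun _ => P)).toReal *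
          (eLpNorm g 2 (.pi fun _ => P)).toReal)) := by
  have hint (θ : ι ⊕ ι' → κ) (ε : ι ⊕ ι' → Bool) :=
    integrable_tensorKernel_offDiag_comp hdiag hf hg (sampleSlot θ ε)
  have hvanish (θ : ι ⊕ ι' → κ) (hθ : θ ∉ repeatingMaps (ι ⊕ ι') κ) :
      ∫ x, centeredInt P (tensorKernel (offDiag f) (offDiag g)) θ x ∂(Measure.pi fun _ => P) =
        0 := by
    obtain ⟨i, hi⟩ := notMem_repeatingMaps.1 hθ
    rw [integral_centeredInt (hint θ), sum_partSign_mul_integral_eq_zero _ hi]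
  simp only [sum_centeredInt_mul_sum_centeredInt]
  rw [integral_finsetSum _ fun θ _ => integrable_centeredInt (hint θ),
    ← Finset.sum_subset (Finset.subset_univ (repeatingMaps (ι ⊕ ι') κ)) fun θ _ => hvanish θ,
    ← nsmul_eq_mul]
  exact (Finset.abs_sum_le_sum_abs _ _).trans <| Finset.sum_le_card_nsmul _ _ _ fun θ _ =>
    abs_integral_centeredInt_tensorKernel_offDiag_le hdiag hcard hf hg hA hgA θ

end MixedMoment

section Symmetrize

variable {E : Type*} {k : ℕ} {f : (Fin k → E) → ℝ}

lemma memLp_symmetrize [MeasurableSpace E] {ν : Measure E} [SigmaFinite ν] {p : ℝ≥0∞}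
    (hf : MemLp f p (.pi fun _ => ν)) : MemLp (symmetrize k f) p (.pi fun _ => ν) :=
  (memLp_finsetSum _ fun σ _ =>
    hf.comp_measurePreserving (measurePreserving_comp_perm (fun _ => ν) σ)).const_mul _

lemma symmetrize_eq_zero {A : Set E} (hf : ∀ u, (∃ i, u i ∉ A) → f u = 0) {u : Fin k → E}
    (hu : ∃ i, u i ∉ A) : symmetrize k f u = 0 := by
  obtain ⟨i, hi⟩ := hu
  have hperm (σ : Equiv.Perm (Fin k)) : f (u ∘ σ) = 0 := hf _ ⟨σ.symm i, by simpa using hi⟩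
  simp [symmetrize, hperm]

end Symmetrize

section Sample

variable {E Ω : Type*} [MeasurableSpace E] [MeasurableSpace Ω] {P : Measure E}
  [IsProbabilityMeasure P] {Pr : Measure Ω} {n k₁ k₂ : ℕ} {f : (Fin k₁ → E) → ℝ}
  {g : (Fin k₂ → E) → ℝ} {X : Fin n → Ω → E}

lemma ae_empInt_eq_sum_centeredInt_symmetrize (hdiag : MeasurableSet {p : E × E | p.1 = p.2})
    (a : ℝ) (hf : Integrable f (.pi fun _ => P)) :
    ∀ᵐ x ∂(Measure.pi fun _ : Fin n => P), empInt P n a x k₁ f =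
      (√a)⁻¹ ^ k₁ * ∑ φ : Fin k₁ → Fin n, centeredInt P (offDiag (symmetrize k₁ f)) φ x := by
  have hsymm : Integrable (symmetrize k₁ f) (.pi fun _ => P) :=
    memLp_one_iff_integrable.1 (memLp_symmetrize (memLp_one_iff_integrable.2 hf))
  filter_upwards [ae_empInt_symmetrize_eq hdiag a hf,
    ae_empInt_eq_sum_centeredInt hdiag a hsymm] with x hx hx'
  rw [← hx, hx']

lemma integral_empInt_mul_empInt_eq (hdiag : MeasurableSet {p : E × E | p.1 = p.2}) (a : ℝ)
    (hX : MeasurePreserving (fun ω j => X j ω) Pr (.pi fun _ => P))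
    (hf : MemLp f 2 (.pi fun _ => P)) (hg : MemLp g 2 (.pi fun _ => P)) :
    ∫ ω, empInt P n a (fun j => X j ω) k₁ f * empInt P n a (fun j => X j ω) k₂ g ∂Pr =
      (√a)⁻¹ ^ (k₁ + k₂) *
        ∫ x, (∑ φ, centeredInt P (offDiag (symmetrize k₁ f)) φ x) *
          ∑ ψ, centeredInt P (offDiag (symmetrize k₂ g)) ψ x ∂(Measure.pi fun _ : Fin n => P) := by
  have hexpand : ∀ᵐ x ∂(Measure.pi fun _ : Fin n => P),
      empInt P n a x k₁ f * empInt P n a x k₂ g = (√a)⁻¹ ^ (k₁ + k₂) *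
        ((∑ φ, centeredInt P (offDiag (symmetrize k₁ f)) φ x) *
          ∑ ψ, centeredInt P (offDiag (symmetrize k₂ g)) ψ x) := by
    filter_upwards [
      ae_empInt_eq_sum_centeredInt_symmetrize hdiag a (hf.integrable one_le_two),
      ae_empInt_eq_sum_centeredInt_symmetrize hdiag a (hg.integrable one_le_two)] with x hfx hgx
    rw [hfx, hgx]
    ring
  have hsample := hX.quasiMeasurePreserving.ae hexpand
  refine (integral_congr_ae hsample).trans ?_
  rw [integral_const_mul, ← hX.map_eq, integral_map hX.aemeasurable]
  exact hX.map_eq ▸ (integrable_sum_centeredInt_mul_sum_centeredInt hdiag (memLp_symmetrize hf)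
    (memLp_symmetrize hg)).1

lemma abs_integral_empInt_mul_empInt_le (hdiag : MeasurableSet {p : E × E | p.1 = p.2})
    {a : ℝ} (hn : 1 ≤ n) {K : ℕ} (hk : k₁ < k₂) (hK : k₂ ≤ K)
    (hX : MeasurePreserving (fun ω j => X j ω) Pr (.pi fun _ => P))
    (hf : MemLp f 2 (.pi fun _ => P)) (hg : MemLp g 2 (.pi fun _ => P)) {A : Set E}
    (hA : MeasurableSet A) (hgA : ∀ u, (∃ i, u i ∉ A) → g u = 0) :
    |∫ ω, empInt P n a (fun j => X j ω) k₁ f * empInt P n a (fun j => X j ω) k₂ g ∂Pr| ≤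
      (√a)⁻¹ ^ (k₁ + k₂) * (√n ^ (k₁ + k₂) * (K : ℝ) ^ (2 * K) * (2 ^ (k₁ + k₂) *
        (√(P.real A) * (eLpNorm (symmetrize k₁ f) 2 (.pi fun _ => P)).toReal *
          (eLpNorm (symmetrize k₂ g) 2 (.pi fun _ => P)).toReal))) := by
  have : Nonempty (Fin n) := ⟨⟨0, hn⟩⟩
  have hcount : ((repeatingMaps (Fin k₁ ⊕ Fin k₂) (Fin n)).card : ℝ) ≤
      √n ^ (k₁ + k₂) * (K : ℝ) ^ (2 * K) := by
    simpa using card_repeatingMaps_le_sqrt_pow_mul (ι := Fin k₁ ⊕ Fin k₂) (κ := Fin n) (K := K)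
      (by omega) (by simp; omega)
  have hmoment := abs_integral_sum_centeredInt_mul_sum_centeredInt_le (κ := Fin n) hdiag
    (by simpa using hk) (memLp_symmetrize hf) (memLp_symmetrize hg) hA
    fun u => symmetrize_eq_zero hgA
  simp only [Fintype.card_sum, Fintype.card_fin] at hmoment
  rw [integral_empInt_mul_empInt_eq hdiag a hX hf hg, abs_mul, abs_of_nonneg (by positivity)]
  gcongr
  exact hmoment.trans (by gcongr)

end Sample

section Conditioning

variable {E ι : Type*} [Fintype ι] [MeasurableSpace E] {μ : Measure E} {A B : Set E}

lemma eq_cond_of_forall_apply_eq_div {P : Measure E}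
    (hP : ∀ B, MeasurableSet B → P B = μ (B ∩ A) / μ A) : P = μ[|A] := by
  ext B hB
  rw [hP B hB, ProbabilityTheory.cond, Measure.smul_apply, Measure.restrict_apply hB, smul_eq_mul,
    ENNReal.div_eq_inv_mul]

lemma real_cond_le (hB : μ B ≠ ∞) : (μ[|A]).real B ≤ μ.real B / μ.real A := by
  rw [ProbabilityTheory.cond, measureReal_ennreal_smul_apply, ENNReal.toReal_inv, div_eq_inv_mul]
  exact mul_le_mul_of_nonneg_left (ENNReal.toReal_mono hB (Measure.restrict_apply_le _ _))
    (by positivity)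

variable [SigmaFinite μ] {f : (ι → E) → ℝ}

lemma memLp_pi_cond (hA : μ A ≠ 0) (hA' : μ A ≠ ∞) {p : ℝ≥0∞} (hf : MemLp f p (.pi fun _ => μ)) :
    MemLp f p (.pi fun _ => μ[|A]) := by
  rw [pi_cond_eq_smul_restrict μ hA hA']
  exact (hf.restrict _).smul_measure (by finiteness)

lemma toReal_eLpNorm_pi_cond_le (hA : μ A ≠ 0) (hA' : μ A ≠ ∞)
    (hf : MemLp f 2 (.pi fun _ => μ)) :
    (eLpNorm f 2 (.pi fun _ => μ[|A])).toReal ≤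
      (√(μ.real A))⁻¹ ^ Fintype.card ι * (eLpNorm f 2 (.pi fun _ => μ)).toReal := by
  rw [pi_cond_eq_smul_restrict μ hA hA', eLpNorm_smul_measure_of_ne_top (by simp), smul_eq_mul,
    ENNReal.toReal_mul, ← ENNReal.toReal_rpow]
  gcongr
  · simp [Measure.real, Real.sqrt_eq_rpow, Real.inv_rpow, Real.rpow_pow_comm]
  · exact hf.2.ne
  · exact Measure.restrict_le_self

end Conditioning

section MainBound

variable {E Ω : Type*} [MeasurableSpace E] [MeasurableSpace Ω] {μ : Measure E} [SigmaFinite μ]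
  {Pr : Measure Ω} {n k₁ k₂ K : ℕ} {f : (Fin k₁ → E) → ℝ} {g : (Fin k₂ → E) → ℝ}
  {X : Fin n → Ω → E} {A B : Set E}

lemma abs_integral_empInt_mul_empInt_cond_le (hdiag : MeasurableSet {p : E × E | p.1 = p.2})
    (hA : μ A ≠ 0) (hA' : μ A ≠ ∞) {a : ℝ} (ha : a = n / μ.real A) (hn : 1 ≤ n) (hk : k₁ < k₂)
    (hK : k₂ ≤ K) (hX : MeasurePreserving (fun ω j => X j ω) Pr (.pi fun _ => μ[|A]))
    (hf : MemLp f 2 (.pi fun _ => μ)) (hg : MemLp g 2 (.pi fun _ => μ))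
    (hB : MeasurableSet B) (hB' : μ B ≠ ∞) (hgB : ∀ u, (∃ i, u i ∉ B) → g u = 0) :
    |∫ ω, empInt μ[|A] n a (fun j => X j ω) k₁ f * empInt μ[|A] n a (fun j => X j ω) k₂ g ∂Pr| ≤
      2 ^ (k₁ + k₂) * (K : ℝ) ^ (2 * K) * ((eLpNorm (symmetrize k₁ f) 2 (.pi fun _ => μ)).toReal *
        (eLpNorm (symmetrize k₂ g) 2 (.pi fun _ => μ)).toReal * √(μ.real B)) * √(a / n) := by
  have := cond_isProbabilityMeasure_of_finite hA hA'
  have hA₀ : 0 < μ.real A := ENNReal.toReal_pos hA hA'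
  have hn₀ : (0 : ℝ) < n := by exact_mod_cast hn
  have hscale : (√a)⁻¹ * √n * (√(μ.real A))⁻¹ = 1 := by
    rw [ha, Real.sqrt_div hn₀.le]
    have := Real.sqrt_pos.2 hA₀
    have := Real.sqrt_pos.2 hn₀
    field_simp
  have hmass : √((μ[|A]).real B) ≤ √(μ.real B) * √(a / n) := by
    have han : a / n = (μ.real A)⁻¹ := by
      rw [ha]
      field_simp
    rw [← Real.sqrt_mul measureReal_nonneg, han, ← div_eq_mul_inv]
    exact Real.sqrt_le_sqrt (real_cond_le hB')
  have hfA := toReal_eLpNorm_pi_cond_le hA hA' (memLp_symmetrize hf)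
  have hgA := toReal_eLpNorm_pi_cond_le hA hA' (memLp_symmetrize hg)
  rw [Fintype.card_fin] at hfA hgA
  set F := (eLpNorm (symmetrize k₁ f) 2 (.pi fun _ => μ)).toReal
  set G := (eLpNorm (symmetrize k₂ g) 2 (.pi fun _ => μ)).toReal
  calc _ ≤ _ := abs_integral_empInt_mul_empInt_le hdiag hn hk hK hX (memLp_pi_cond hA hA' hf)
        (memLp_pi_cond hA hA' hg) hB hgB
    _ ≤ (√a)⁻¹ ^ (k₁ + k₂) * (√n ^ (k₁ + k₂) * (K : ℝ) ^ (2 * K) * (2 ^ (k₁ + k₂) *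
          (√(μ.real B) * √(a / n) * ((√(μ.real A))⁻¹ ^ k₁ * F) *
            ((√(μ.real A))⁻¹ ^ k₂ * G)))) := by
        gcongr
    _ = ((√a)⁻¹ * √n * (√(μ.real A))⁻¹) ^ (k₁ + k₂) *
          (2 ^ (k₁ + k₂) * (K : ℝ) ^ (2 * K) * (F * G * √(μ.real B)) * √(a / n)) := by
        rw [mul_pow, mul_pow, pow_add (√(μ.real A))⁻¹]
        ring
    _ = _ := by rw [hscale, one_pow, one_mul]

end MainBound

lemma two_pow_mul_le_pow {N K : ℕ} {b : ℝ} (hb : 0 ≤ b) (hK : 1 ≤ K) (hN : N ≤ 2 * K) :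
    2 ^ N * b ≤ (4 * (1 + b)) ^ K :=
  calc 2 ^ N * b ≤ 2 ^ (2 * K) * (1 + b) ^ K := by
        gcongr
        · exact one_le_two
        · exact (le_add_of_nonneg_left zero_le_one).trans
            (le_self_pow₀ (le_add_of_nonneg_right hb) (by omega))
    _ = (4 * (1 + b)) ^ K := by
        rw [pow_mul, mul_pow]
        norm_num

lemma le_sqrt_tsum_factorial_mul_sq {c : ℕ → ℝ}
    (hc : Summable fun k => (k.factorial : ℝ) * c k ^ 2) (k : ℕ) :
    c k ≤ √(∑' k, (k.factorial : ℝ) * c k ^ 2) := by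
  have hfact : (1 : ℝ) ≤ k.factorial := by exact_mod_cast k.factorial_pos
  exact Real.le_sqrt_of_sq_le <| (le_mul_of_one_le_left (sq_nonneg _) hfact).trans
    (hc.le_tsum k fun j _ => by positivity)

theorem gamma_offdiag_bound_general
    {E Ω : Type*} [MeasurableSpace E] [MeasurableSpace Ω] (μ : Measure E) [SigmaFinite μ]
    (Eset : ℕ → Set E) (hEpos : ∀ n : ℕ, 1 ≤ n → 0 < μ (Eset n))
    (hEfin : ∀ n : ℕ, 1 ≤ n → μ (Eset n) < ∞)
    (a : ℕ → ℝ) (ha : ∀ n : ℕ, 1 ≤ n → a n = (n : ℝ) / (μ (Eset n)).toReal)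
    (P : ℕ → Measure E) (hP : ∀ n : ℕ, 1 ≤ n → P n = μ[|Eset n])
    (Pr : Measure Ω) [IsProbabilityMeasure Pr] (X : (n : ℕ) → Fin n → Ω → E)
    (hXmeas : ∀ n j, Measurable (X n j))
    (hXlaw : ∀ n : ℕ, 1 ≤ n → ∀ j, Measure.map (X n j) Pr = P n)
    (hXindep : ∀ n : ℕ, iIndepFun (X n) Pr)
    (hdiag : MeasurableSet {p : E × E | p.1 = p.2}) (h : (k : ℕ) → (Fin k → E) → ℝ)
    (hmem : ∀ k : ℕ, MemLp (h k) 2 (Measure.pi fun _ : Fin k => μ))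
    (hH : Summable fun k : ℕ => (k.factorial : ℝ) *
      (eLpNorm (symmetrize k (h k)) 2 (Measure.pi fun _ : Fin k => μ)).toReal ^ 2)
    (S : Set E) (hSmeas : MeasurableSet S) (hSfin : μ S < ∞)
    (hsupp : ∀ k : ℕ, 1 ≤ k → ∀ u : Fin k → E, (∃ i, u i ∉ S) → h k u = 0) :
    ∃ C : ℝ, 0 < C ∧ ∀ K n k1 k2 : ℕ, 1 ≤ n → k1 < k2 → k2 ≤ K →
      |∫ ω, empInt (P n) n (a n) (fun j => X n j ω) k1 (h k1) *
          empInt (P n) n (a n) (fun j => X n j ω) k2 (h k2) ∂Pr| ≤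
        C ^ K * (K : ℝ) ^ (2 * K) * Real.sqrt (a n / n) := by
  have hnorm := le_sqrt_tsum_factorial_mul_sq hH
  set b := √(∑' k : ℕ, (k.factorial : ℝ) *
    (eLpNorm (symmetrize k (h k)) 2 (Measure.pi fun _ : Fin k => μ)).toReal ^ 2)
  refine ⟨4 * (1 + b * b * √(μ.real S)), by positivity, fun K n k1 k2 hn hk hK => ?_⟩
  have hX : MeasurePreserving (fun ω j => X n j ω) Pr (.pi fun _ => μ[|Eset n]) := by
    refine ⟨measurable_pi_lambda _ (hXmeas n), ?_⟩
    rw [(iIndepFun_iff_map_fun_eq_pi_map fun j => (hXmeas n j).aemeasurable).1 (hXindep n)]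
    simp only [hXlaw n hn, hP n hn]
  rw [hP n hn]
  calc _ ≤ _ := abs_integral_empInt_mul_empInt_cond_le hdiag (hEpos n hn).ne' (hEfin n hn).ne
        (ha n hn) hn hk hK hX (hmem k1) (hmem k2) hSmeas hSfin.ne (hsupp k2 (by omega))
    _ ≤ 2 ^ (k1 + k2) * (K : ℝ) ^ (2 * K) * (b * b * √(μ.real S)) * √(a n / n) := by
        gcongr
        · exact hnorm k1
        · exact hnorm k2
    _ = 2 ^ (k1 + k2) * (b * b * √(μ.real S)) * (K : ℝ) ^ (2 * K) * √(a n / n) := by ring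
    _ ≤ (4 * (1 + b * b * √(μ.real S))) ^ K * (K : ℝ) ^ (2 * K) * √(a n / n) := by
        gcongr
        exact two_pow_mul_le_pow (by positivity) (by omega) (by omega)

/-- In the Example setup (`P n = μ(· ∩ E n)/μ(E n)`, `a n = n/μ(E n)`),
for `h = (h^{(k)})_k ∈ H` with all `h^{(k)}` (for `k ≥ 1`) supported in `E_{n₀}^k`, the
mixed second moments `γ_n(k₁,k₂) = 𝔼[I_{k₁}^{(n)}(h^{(k₁)}) I_{k₂}^{(n)}(h^{(k₂)})]`
satisfy `sup_{1 ≤ k₁ < k₂ ≤ K} |γ_n(k₁,k₂)| ≤ C^K K^{2K} (a_n/n)^{1/2}` for every `K ≥ 2`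
and every `n ≥ K`. -/
theorem gamma_offdiag_bound
    {E Ω : Type*} [MeasurableSpace E] [MeasurableSpace Ω]
    (μ : Measure E) [SigmaFinite μ] [NullSingletonClass μ] (hμ : μ Set.univ = ∞)
    (Eset : ℕ → Set E) (hEmeas : ∀ n, MeasurableSet (Eset n))
    (hEmono : ∀ n : ℕ, 1 ≤ n → Eset n ⊆ Eset (n + 1))
    (hEpos : ∀ n : ℕ, 1 ≤ n → 0 < μ (Eset n))
    (hEfin : ∀ n : ℕ, 1 ≤ n → μ (Eset n) < ∞)
    (hEcover : (⋃ n : ℕ, ⋃ (_ : 1 ≤ n), Eset n) = Set.univ)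
    (hEsmall : Tendsto (fun n : ℕ => (μ (Eset n)).toReal / n) atTop (𝓝 0))
    (a : ℕ → ℝ) (ha : ∀ n : ℕ, 1 ≤ n → a n = (n : ℝ) / (μ (Eset n)).toReal)
    (P : ℕ → Measure E) [∀ n, IsProbabilityMeasure (P n)]
    (hP : ∀ n : ℕ, 1 ≤ n → ∀ B : Set E, MeasurableSet B →
      P n B = μ (B ∩ Eset n) / μ (Eset n))
    (Pr : Measure Ω) [IsProbabilityMeasure Pr]
    (X : (n : ℕ) → Fin n → Ω → E)
    (hXmeas : ∀ n j, Measurable (X n j))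
    (hXlaw : ∀ n : ℕ, 1 ≤ n → ∀ j, Measure.map (X n j) Pr = P n)
    (hXindep : ∀ n : ℕ, iIndepFun (m := fun _ : Fin n => ‹MeasurableSpace E›) (X n) Pr)
    (hdiag : MeasurableSet {p : E × E | p.1 = p.2})
    (h : (k : ℕ) → (Fin k → E) → ℝ)
    (hmem : ∀ k : ℕ, MemLp (h k) 2 (Measure.pi fun _ : Fin k => μ))
    (hH : Summable (fun k : ℕ => (k.factorial : ℝ) *
      ((eLpNorm (symmetrize k (h k)) 2 (Measure.pi fun _ : Fin k => μ)).toReal) ^ 2))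
    (n0 : ℕ) (hn0 : 1 ≤ n0)
    (hsupp : ∀ k : ℕ, 1 ≤ k → ∀ u : Fin k → E, (∃ i, u i ∉ Eset n0) → h k u = 0) :
    ∃ C : ℝ, 0 < C ∧ ∀ K n k1 k2 : ℕ, 2 ≤ K → K ≤ n →
      1 ≤ k1 → k1 < k2 → k2 ≤ K →
      |∫ ω, empInt (P n) n (a n) (fun j => X n j ω) k1 (h k1) *
          empInt (P n) n (a n) (fun j => X n j ω) k2 (h k2) ∂Pr| ≤
        C ^ K * (K : ℝ) ^ (2 * K) * Real.sqrt (a n / n) := by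
  obtain ⟨C, hC, hbound⟩ := gamma_offdiag_bound_general μ Eset hEpos hEfin a ha P
    (fun n hn => eq_cond_of_forall_apply_eq_div (hP n hn)) Pr X hXmeas hXlaw hXindep hdiag h hmem
    hH (Eset n0) (hEmeas n0) (hEfin n0 hn0) hsupp
  exact ⟨C, hC, fun K n k1 k2 _ hKn _ hk hK => hbound K n k1 k2 (by omega) hk hK⟩
end
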